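/- arXiv:2601.08359 — 2 statements merged into one kernel-verified Lean document; each statement's English description precedes it below -/
import Mathlib

section
/- Let W ⊆ ⟦𝕐⟧ satisfy dim_H(W) < 1/2. Then Player II has a winning pure strategy in the binary Gale–Stewart game with target set W (no measurability assumption on W is needed); in particular, the game with target set W is determined. -/
open Metric Set Filter MeasureTheory

noncomputable local instance : MetricSpace (ℕ → Bool) := PiNat.metricSpace

/-- The finite prefix `⟨x 0, …, x (n-1)⟩` of a play. -/
def prefixList (x : ℕ → Bool) (n : ℕ) : List Bool := List.ofFn fun i : Fin n => x i

/-- `x` is a play consistent with the Player I pure strategy `sI`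
(Player I chooses the bits at even stages). -/
def ConsistentI (sI : List Bool → Bool) (x : ℕ → Bool) : Prop :=
  ∀ n : ℕ, Even n → x n = sI (prefixList x n)

/-- `x` is a play consistent with the Player II pure strategy `sII`
(Player II chooses the bits at odd stages). -/
def ConsistentII (sII : List Bool → Bool) (x : ℕ → Bool) : Prop :=
  ∀ n : ℕ, Odd n → x n = sII (prefixList x n)

open scoped ENNReal

theorem length_prefixList (x : ℕ → Bool) (n : ℕ) : (prefixList x n).length = n := by
  simp [prefixList]

theorem prefixList_eq_of_mem_cylinder {x y : ℕ → Bool} {n k : ℕ} (h : y ∈ PiNat.cylinder x n)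
    (hk : k ≤ n) : prefixList y k = prefixList x k := by
  unfold prefixList
  congr 1
  funext i
  exact h i (i.2.trans_le hk)

/-- The law of a uniformly random strategy: the bits at all positions are independent fair coins. -/
noncomputable def coinStrategy : Measure (List Bool → Bool) :=
  Measure.infinitePi fun _ => (PMF.uniformOfFintype Bool).toMeasure

instance : IsProbabilityMeasure coinStrategy := by
  unfold coinStrategy
  infer_instance

/-- The strategies for Player II having a consistent play in `t`. -/
def reachingStrategies (t : Set (ℕ → Bool)) : Set (List Bool → Bool) :=
  {s | ∃ x ∈ t, ConsistentII s x}

theorem coinStrategy_reachingStrategies_cylinder_le (x : ℕ → Bool) (m : ℕ) :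
    coinStrategy (reachingStrategies (PiNat.cylinder x (2 * m))) ≤ 2⁻¹ ^ m := by
  classical
  set F : Finset (List Bool) := (Finset.range m).image fun j => prefixList x (2 * j + 1) with hF
  have hcard : F.card = m := by
    rw [hF, Finset.card_image_of_injective, Finset.card_range]
    intro i j hij
    have := congrArg List.length hij
    simp only [length_prefixList] at this
    omega
  have hsub : reachingStrategies (PiNat.cylinder x (2 * m)) ⊆
      Set.pi F fun l => {x l.length} := by
    rintro s ⟨y, hy, hs⟩ l hl
    obtain ⟨j, hj, rfl⟩ := Finset.mem_image.1 (Finset.mem_coe.1 hl)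
    have hjm := Finset.mem_range.1 hj
    rw [mem_singleton_iff, length_prefixList, ← hy _ (by omega),
      ← prefixList_eq_of_mem_cylinder hy (by omega)]
    exact (hs _ ⟨j, rfl⟩).symm
  refine (measure_mono hsub).trans_eq ?_
  rw [coinStrategy, Measure.infinitePi_pi _ fun _ _ => measurableSet_singleton _]
  simp [hcard]

theorem mem_cylinder_of_ediam_le {t : Set (ℕ → Bool)} {n : ℕ} (ht : ediam t ≤ 2⁻¹ ^ n)
    {x y : ℕ → Bool} (hx : x ∈ t) (hy : y ∈ t) : y ∈ PiNat.cylinder x n := by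
  refine PiNat.mem_cylinder_iff_dist_le.2 ?_
  have h := (edist_le_ediam_of_mem hy hx).trans ht
  rw [edist_dist] at h
  refine (ENNReal.ofReal_le_ofReal_iff (by positivity)).1 (h.trans_eq ?_)
  rw [ENNReal.ofReal_pow (by positivity), one_div, ENNReal.ofReal_inv_of_pos two_pos]
  simp

theorem coinStrategy_reachingStrategies_le {t : Set (ℕ → Bool)} (ht : t.Nonempty) :
    coinStrategy (reachingStrategies t) ≤ 2 * ediam t ^ (1 / 2 : ℝ) := by
  obtain ⟨x, hx⟩ := ht
  by_contra! hlt
  set e := coinStrategy (reachingStrategies t)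
  have he1 : e ≤ 1 := prob_le_one
  have hetop : e ≠ ∞ := ne_top_of_le_ne_top ENNReal.one_ne_top he1
  obtain ⟨n, hn, hn'⟩ := exists_nat_pow_near_of_lt_one
    (ENNReal.toReal_pos (pos_of_gt hlt).ne' hetop)
    (ENNReal.toReal_mono ENNReal.one_ne_top he1) (y := (2⁻¹ : ℝ)) (by norm_num) (by norm_num)
  have hpow : ∀ k : ℕ, ((2⁻¹ : ℝ≥0∞) ^ k).toReal = 2⁻¹ ^ k := by simp
  have hpowtop : ∀ k : ℕ, (2⁻¹ : ℝ≥0∞) ^ k ≠ ∞ := by simp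
  rw [← hpow, ENNReal.toReal_lt_toReal (hpowtop _) hetop] at hn
  rw [← hpow, ENNReal.toReal_le_toReal hetop (hpowtop _)] at hn'
  have hsqrt : ediam t ^ (1 / 2 : ℝ) ≤ 2⁻¹ ^ (n + 1) := by
    have := hlt.le.trans hn'
    rw [pow_succ, ← div_eq_mul_inv, ENNReal.le_div_iff_mul_le (by simp) (by simp), mul_comm]
    exact this
  have hdiam : ediam t ≤ 2⁻¹ ^ (2 * (n + 1)) := by
    have := ENNReal.rpow_le_rpow hsqrt (zero_le_two (α := ℝ))
    rw [← ENNReal.rpow_mul] at this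
    norm_num at this
    rw [mul_comm, pow_mul]
    simpa using this
  refine hn.not_ge ((measure_mono ?_).trans (coinStrategy_reachingStrategies_cylinder_le x (n + 1)))
  rintro s ⟨y, hy, hs⟩
  exact ⟨y, mem_cylinder_of_ediam_le hdiam hx hy, hs⟩

theorem exists_strategyII_of_dimH_lt_half {W : Set (ℕ → Bool)} (hW : dimH W < 1 / 2) :
    ∃ sII : List Bool → Bool, ∀ x : ℕ → Bool, ConsistentII sII x → x ∉ W := by
  have hnull : Measure.hausdorffMeasure (1 / 2 : ℝ) W = 0 := by
    have := hausdorffMeasure_of_dimH_lt (d := 1 / 2) (by simpa using hW)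
    simpa using this
  rw [Measure.hausdorffMeasure_apply] at hnull
  have hcover := (le_iSup₂ (f := fun (r : ℝ≥0∞) (_ : 0 < r) =>
    ⨅ (t : ℕ → Set (ℕ → Bool)) (_ : W ⊆ ⋃ n, t n) (_ : ∀ n, ediam (t n) ≤ r),
      ∑' n, ⨆ _ : (t n).Nonempty, ediam (t n) ^ (1 / 2 : ℝ)) 1 one_pos).trans_eq hnull
  have hlt := hcover.trans_lt (show (0 : ℝ≥0∞) < 2⁻¹ by simp)
  simp only [iInf_lt_iff] at hlt
  obtain ⟨t, hWt, -, hsum⟩ := hlt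
  have hmeas : coinStrategy (⋃ n, reachingStrategies (t n)) < 1 := by
    calc coinStrategy (⋃ n, reachingStrategies (t n))
        ≤ ∑' n, coinStrategy (reachingStrategies (t n)) := measure_iUnion_le _
      _ ≤ ∑' n, 2 * ⨆ _ : (t n).Nonempty, ediam (t n) ^ (1 / 2 : ℝ) := by
          refine ENNReal.tsum_le_tsum fun n => ?_
          rcases (t n).eq_empty_or_nonempty with h | h
          · simp [h, reachingStrategies]
          · simpa only [h, iSup_pos] using coinStrategy_reachingStrategies_le h
      _ = 2 * ∑' n, ⨆ _ : (t n).Nonempty, ediam (t n) ^ (1 / 2 : ℝ) := ENNReal.tsum_mul_left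
      _ < 2 * 2⁻¹ := ENNReal.mul_lt_mul_right (by simp) (by simp) hsum
      _ = 1 := ENNReal.mul_inv_cancel (by simp) (by simp)
  have hne : (⋃ n, reachingStrategies (t n)) ≠ univ := by
    intro h
    simp [h] at hmeas
  obtain ⟨s, hs⟩ := (ne_univ_iff_exists_notMem _).1 hne
  refine ⟨s, fun x hx hxW => hs ?_⟩
  obtain ⟨n, hn⟩ := mem_iUnion.1 (hWt hxW)
  exact mem_iUnion.2 ⟨n, x, hn, hx⟩

/-- If `dim_H W < 1/2` then Player II has a winning pure strategy in the binary
Gale–Stewart game with target set `W`; in particular the game is determined. -/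
theorem playerII_wins_of_dimH_lt_half (W : Set (ℕ → Bool)) (hW : dimH W < 1 / 2) :
    (∃ sII : List Bool → Bool, ∀ x : ℕ → Bool, ConsistentII sII x → x ∉ W) ∧
    ((∃ sI : List Bool → Bool, ∀ x : ℕ → Bool, ConsistentI sI x → x ∈ W) ∨
      (∃ sII : List Bool → Bool, ∀ x : ℕ → Bool, ConsistentII sII x → x ∉ W)) :=
  ⟨exists_strategyII_of_dimH_lt_half hW, Or.inr (exists_strategyII_of_dimH_lt_half hW)⟩
end

section
/- Let T be a tree over an alphabet 𝒜, let ξ : 𝒫(⟦T⟧) → [0,∞] be monotone (C ⊆ Z implies ξ(C) ≤ ξ(Z)), and set t := inf of ξ(⟦s_I⟧) over all pure strategies s_I of Player I in T. If W ⊆ ⟦T⟧ satisfies ξ(W) < t, then Player I has no winning strategy in the game (T,W). Moreover, if in addition W is a Borel subset of ⟦T⟧, or ξ is Borel regular (meaning that for every C ⊆ ⟦T⟧ there exists a Borel set Z ⊆ ⟦T⟧ with C ⊆ Z and ξ(C) = ξ(Z)), then Player II has a winning strategy in (T,W). -/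
open Set Filter MeasureTheory
open scoped ENNReal

variable {A : Type*}

/-- A tree over the alphabet `A`: a nonempty, prefix-closed set of finite sequences in which
every position has a one-step extension. -/
def IsTree (T : Set (List A)) : Prop :=
  T.Nonempty ∧ (∀ p ∈ T, ∀ q : List A, q <+: p → q ∈ T) ∧ ∀ p ∈ T, ∃ a : A, p ++ [a] ∈ T

/-- The canopy `⟦T⟧`: the set of infinite plays all of whose finite prefixes lie in `T`. -/
def canopy (T : Set (List A)) : Set (ℕ → A) :=
  {x : ℕ → A | ∀ n : ℕ, (List.ofFn fun i : Fin n => x i) ∈ T}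

/-- `s` is a legal pure strategy of Player I in the tree `T` (Player I moves at positions of
even length). -/
def ValidI (T : Set (List A)) (s : List A → A) : Prop :=
  ∀ p ∈ T, Even p.length → p ++ [s p] ∈ T

/-- `s` is a legal pure strategy of Player II in the tree `T` (Player II moves at positions of
odd length). -/
def ValidII (T : Set (List A)) (s : List A → A) : Prop :=
  ∀ p ∈ T, Odd p.length → p ++ [s p] ∈ T

/-- `⟦s⟧` for a Player I strategy: the plays in `⟦T⟧` consistent with `s`. -/
def playsI (T : Set (List A)) (s : List A → A) : Set (ℕ → A) :=
  {x ∈ canopy T | ∀ n : ℕ, Even n → x n = s (List.ofFn fun i : Fin n => x i)}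

/-- `⟦s⟧` for a Player II strategy: the plays in `⟦T⟧` consistent with `s`. -/
def playsII (T : Set (List A)) (s : List A → A) : Set (ℕ → A) :=
  {x ∈ canopy T | ∀ n : ℕ, Odd n → x n = s (List.ofFn fun i : Fin n => x i)}

/-- `Z` is a Borel subset of the canopy `⟦T⟧`, for the subspace topology induced by the
product topology on `A^ℕ` with `A` discrete. -/
def BorelInCanopy [TopologicalSpace A] (T : Set (List A)) (Z : Set (ℕ → A)) : Prop :=
  @MeasurableSet (canopy T) (borel (canopy T)) (Subtype.val ⁻¹' Z)

namespace BorelGame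

universe u

/-- A game arena: `pos n` is the type of positions of length `n`, and every position has a
one-step extension. -/
structure Arena where
  pos : ℕ → Type u
  par : ∀ {n : ℕ}, pos (n + 1) → pos n
  exists_child : ∀ {n : ℕ} (p : pos n), ∃ q : pos (n + 1), par q = p

namespace Arena

/-- Infinite plays of an arena. -/
structure Play (X : Arena.{u}) : Type u where
  seq : ∀ n, X.pos n
  par_succ : ∀ n, X.par (seq (n + 1)) = seq n

instance (X : Arena.{u}) : CoeFun X.Play fun _ => ∀ n, X.pos n := ⟨Play.seq⟩

/-- A strategy prescribes a move at every position; a player only uses the moves at the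
positions of the relevant parity. -/
structure Strat (X : Arena.{u}) : Type u where
  move : ∀ n, X.pos n → X.pos (n + 1)
  par_move : ∀ n p, X.par (move n p) = p

instance (X : Arena.{u}) : CoeFun X.Strat fun _ => ∀ n, X.pos n → X.pos (n + 1) :=
  ⟨Strat.move⟩

/-- Sets of positions of an arena. -/
abbrev PosSet (X : Arena.{u}) : Type u := ∀ n, X.pos n → Prop

/-- The player moving at positions whose length is congruent to `i` modulo `2` follows `σ`. -/
def Follows (X : Arena.{u}) (i : ℕ) (σ : X.Strat) (x : X.Play) : Prop :=
  ∀ n, n % 2 = i → x (n + 1) = σ n (x n)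

variable {X : Arena.{u}}

theorem Strat.par_apply (σ : X.Strat) {n : ℕ} (p : X.pos n) : X.par (σ n p) = p := σ.2 n p

theorem Play.ext {x y : X.Play} (h : ∀ n, x n = y n) : x = y := by
  cases x
  cases y
  congr
  exact funext h

theorem Strat.ext {σ τ : X.Strat} (h : ∀ n, σ n = τ n) : σ = τ := by
  cases σ
  cases τ
  congr
  exact funext h

theorem Play.eq_of_le {x y : X.Play} {m n : ℕ} (hmn : m ≤ n) (h : x n = y n) : x m = y m := by
  induction n, hmn using Nat.le_induction with
  | base => exact h
  | succ n _ ih => exact ih (by rw [← x.par_succ, ← y.par_succ, h])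

instance : Nonempty X.Strat := by
  choose f hf using fun n (p : X.pos n) => X.exists_child p
  exact ⟨⟨f, hf⟩⟩

/-- The arena of positions of positive length. -/
def shift (X : Arena.{u}) : Arena.{u} where
  pos n := X.pos (n + 1)
  par := X.par
  exists_child := X.exists_child

theorem exists_play_through {n : ℕ} : ∀ {X : Arena.{u}} (p : X.pos n), ∃ x : X.Play, x n = p := by
  induction n with
  | zero =>
    intro X p
    obtain ⟨σ⟩ : Nonempty X.Strat := inferInstance
    exact ⟨⟨fun n => Nat.rec p (fun m q => σ m q) n, fun n => σ.par_apply _⟩, rfl⟩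
  | succ n ih =>
    intro X p
    obtain ⟨y, hy⟩ := ih (X := X.shift) p
    refine ⟨⟨fun m => match m with
      | 0 => X.par (y 0)
      | m + 1 => y m, fun m => ?_⟩, hy⟩
    cases m with
    | zero => rfl
    | succ m => exact y.par_succ m

/-- A play through a given position; its initial segment is the history of the position. -/
noncomputable def hist {n : ℕ} (p : X.pos n) : X.Play := (exists_play_through p).choose

theorem hist_self {n : ℕ} (p : X.pos n) : hist p n = p := (exists_play_through p).choose_spec

theorem hist_play (x : X.Play) {m n : ℕ} (h : m ≤ n) : hist (x n) m = x m :=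
  Play.eq_of_le h (hist_self _)

theorem hist_par {m n : ℕ} (p : X.pos (n + 1)) (h : m ≤ n) : hist (X.par p) m = hist p m := by
  refine Play.eq_of_le h ?_
  rw [hist_self, ← Play.par_succ, hist_self]

/-- A set of plays is open if membership is decided by a finite initial segment. -/
def OpenSet (B : Set X.Play) : Prop := ∀ x ∈ B, ∃ n, ∀ y : X.Play, y n = x n → y ∈ B

section Reach

variable (i : ℕ) (S U : X.PosSet)

/-- The player of parity `i`, whose moves are restricted to `S`, can force the play from the
given position into `U`, with ordinal rank at most the given one. -/
inductive ReachRank : Ordinal.{u} → ∀ n, X.pos n → Prop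
  | base {α : Ordinal.{u}} {n : ℕ} {p : X.pos n} (h : U n p) : ReachRank α n p
  | own {α β : Ordinal.{u}} {n : ℕ} (q : X.pos (n + 1)) (hn : n % 2 = i) (hS : S (n + 1) q)
      (hβ : β < α) (h : ReachRank β (n + 1) q) : ReachRank α n (X.par q)
  | opp {α : Ordinal.{u}} {n : ℕ} {p : X.pos n} (hn : n % 2 ≠ i)
      (b : X.pos (n + 1) → Ordinal.{u}) (hb : ∀ q, X.par q = p → b q < α)
      (h : ∀ q, X.par q = p → ReachRank (b q) (n + 1) q) : ReachRank α n p

/-- The positions from which the player of parity `i` can force the play into `U`. -/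
def Reach (n : ℕ) (p : X.pos n) : Prop := ∃ α, ReachRank i S U α n p

/-- The least rank of a position. -/
noncomputable def rank {n : ℕ} (p : X.pos n) : Ordinal.{u} := sInf {α | ReachRank i S U α n p}

variable {i S U}

theorem ReachRank.cases_of_not {α : Ordinal.{u}} {n : ℕ} {p : X.pos n}
    (h : ReachRank i S U α n p) (hU : ¬ U n p) :
    (n % 2 = i ∧ ∃ q, X.par q = p ∧ S (n + 1) q ∧ ∃ β < α, ReachRank i S U β (n + 1) q) ∨
    (n % 2 ≠ i ∧ ∀ q, X.par q = p → ∃ β < α, ReachRank i S U β (n + 1) q) := by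
  cases h with
  | base h => exact absurd h hU
  | own q hn hS hβ h => exact Or.inl ⟨hn, q, rfl, hS, _, hβ, h⟩
  | opp hn b hb h => exact Or.inr ⟨hn, fun q hq => ⟨b q, hb q hq, h q hq⟩⟩

theorem Reach.reachRank_rank {n : ℕ} {p : X.pos n} (h : Reach i S U n p) :
    ReachRank i S U (rank i S U p) n p :=
  csInf_mem (s := {α | ReachRank i S U α n p}) h

theorem ReachRank.rank_le {α : Ordinal.{u}} {n : ℕ} {p : X.pos n} (h : ReachRank i S U α n p) :
    rank i S U p ≤ α :=
  csInf_le' (s := {α | ReachRank i S U α n p}) h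

open Classical in
variable (i S U) in
/-- The positional strategy decreasing the rank. -/
noncomputable def reachStrat : X.Strat :=
  ⟨fun n p => if h : ∃ q, X.par q = p ∧ S (n + 1) q ∧
      ∃ β < rank i S U p, ReachRank i S U β (n + 1) q then h.choose
    else (X.exists_child p).choose, fun n p => by
      split_ifs with h
      · exact h.choose_spec.1
      · exact (X.exists_child p).choose_spec⟩

theorem reachStrat_spec {n : ℕ} {p : X.pos n} (h : Reach i S U n p) (hU : ¬ U n p)
    (hn : n % 2 = i) : S (n + 1) (reachStrat i S U n p) ∧
      ∃ β < rank i S U p, ReachRank i S U β (n + 1) (reachStrat i S U n p) := by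
  have hex : ∃ q, X.par q = p ∧ S (n + 1) q ∧
      ∃ β < rank i S U p, ReachRank i S U β (n + 1) q := by
    rcases h.reachRank_rank.cases_of_not hU with h | h
    · exact h.2
    · exact absurd hn h.1
  have : reachStrat i S U n p = hex.choose := by
    simp only [reachStrat]
    exact dif_pos hex
  rw [this]
  exact hex.choose_spec.2

theorem Reach.exists_lt {n : ℕ} {q : X.pos (n + 1)} (h : Reach i S U n (X.par q))
    (hU : ¬ U n (X.par q)) (hq : n % 2 = i → q = reachStrat i S U n (X.par q)) :
    ∃ β < rank i S U (X.par q), ReachRank i S U β (n + 1) q := by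
  by_cases hn : n % 2 = i
  · have := (reachStrat_spec h hU hn).2
    rwa [← hq hn] at this
  · rcases h.reachRank_rank.cases_of_not hU with h' | h'
    · exact absurd h'.1 hn
    · exact h'.2 q rfl

theorem Reach.exists_mem {x : X.Play} {n₀ : ℕ} (h : Reach i S U n₀ (x n₀))
    (hx : ∀ n, n₀ ≤ n → Reach i S U n (x n) → (∀ m ≤ n, ¬ U m (x m)) → n % 2 = i →
      x (n + 1) = reachStrat i S U n (x n)) : ∃ m, U m (x m) := by
  by_contra! hU
  have key : ∀ α : Ordinal.{u}, ∀ n, n₀ ≤ n → ¬ ReachRank i S U α n (x n) := by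
    intro α
    induction α using WellFoundedLT.induction with
    | _ α ih =>
      intro n hn hr
      have hn' : Reach i S U n (X.par (x (n + 1))) := by rw [x.par_succ]; exact ⟨α, hr⟩
      obtain ⟨β, hβ, hβr⟩ := hn'.exists_lt (by rw [x.par_succ]; exact hU n)
        (fun hp => by rw [x.par_succ]; exact hx n hn ⟨α, hr⟩ (fun m _ => hU m) hp)
      rw [x.par_succ] at hβ
      exact ih β (hβ.trans_le hr.rank_le) (n + 1) (by omega) hβr
  obtain ⟨α, hα⟩ := h
  exact key α n₀ le_rfl hα

theorem not_mem_of_not_reach {n : ℕ} {p : X.pos n} (h : ¬ Reach i S U n p) : ¬ U n p :=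
  fun hU => h ⟨0, .base hU⟩

theorem not_reach_of_own {n : ℕ} {q : X.pos (n + 1)} (h : ¬ Reach i S U n (X.par q))
    (hn : n % 2 = i) (hS : S (n + 1) q) : ¬ Reach i S U (n + 1) q := by
  rintro ⟨α, hα⟩
  exact h ⟨Order.succ α, .own q hn hS (Order.lt_succ α) hα⟩

theorem exists_not_reach_of_opp {n : ℕ} {p : X.pos n} (h : ¬ Reach i S U n p)
    (hn : n % 2 ≠ i) : ∃ q, X.par q = p ∧ ¬ Reach i S U (n + 1) q := by
  by_contra! hq
  refine h ⟨Order.succ (⨆ q : X.pos (n + 1), rank i S U q), .opp hn (fun q => rank i S U q)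
    (fun q _ => ?_) fun q hqp => (hq q hqp).reachRank_rank⟩
  exact Order.lt_succ_of_le (Ordinal.le_iSup (fun q : X.pos (n + 1) => rank i S U q) q)

end Reach

/-- The Gale–Stewart theorem for open sets. -/
theorem OpenSet.determined [Subsingleton (X.pos 0)] {B : Set X.Play} (hB : OpenSet B) :
    (∃ σ : X.Strat, ∀ x, X.Follows 0 σ x → x ∈ B) ∨
      ∃ σ : X.Strat, ∀ x, X.Follows 1 σ x → x ∉ B := by
  classical
  let U : X.PosSet := fun n p => ∀ y : X.Play, y n = p → y ∈ B
  let S : X.PosSet := fun _ _ => True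
  by_cases h : ∃ p : X.pos 0, Reach 0 S U 0 p
  · obtain ⟨p, hp⟩ := h
    refine Or.inl ⟨reachStrat 0 S U, fun x hx => ?_⟩
    rw [Subsingleton.elim p (x 0)] at hp
    obtain ⟨m, hm⟩ := hp.exists_mem fun n _ _ _ hn => hx n hn
    exact hm x rfl
  · have hex : ∀ n (p : X.pos n), ∃ q, X.par q = p ∧
        (¬ Reach 0 S U n p → n % 2 ≠ 0 → ¬ Reach 0 S U (n + 1) q) := by
      intro n p
      by_cases hp : ¬ Reach 0 S U n p ∧ n % 2 ≠ 0
      · obtain ⟨q, hq, hq'⟩ := exists_not_reach_of_opp hp.1 hp.2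
        exact ⟨q, hq, fun _ _ => hq'⟩
      · obtain ⟨q, hq⟩ := X.exists_child p
        exact ⟨q, hq, fun h1 h2 => absurd ⟨h1, h2⟩ hp⟩
    choose f hf hf' using hex
    refine Or.inr ⟨⟨f, hf⟩, fun x hx hxB => ?_⟩
    have key : ∀ n, ¬ Reach 0 S U n (x n) := by
      intro n
      induction n with
      | zero => exact fun h' => h ⟨_, h'⟩
      | succ n ih =>
        by_cases hn : n % 2 = 0
        · exact not_reach_of_own (by rwa [x.par_succ]) hn trivial
        · rw [hx n (by omega)]
          exact hf' n (x n) ih hn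
    obtain ⟨n, hn⟩ := hB x hxB
    exact not_mem_of_not_reach (key n) hn

/-- Length-preserving monotone maps between arenas. -/
structure Hom (Y X : Arena.{u}) where
  map : ∀ {n : ℕ}, Y.pos n → X.pos n
  par_map : ∀ {n : ℕ} (p : Y.pos (n + 1)), X.par (map p) = map (Y.par p)

namespace Hom

variable {X Y Z : Arena.{u}}

/-- The identity map. -/
protected def id (X : Arena.{u}) : Hom X X := ⟨fun p => p, fun _ => rfl⟩

/-- Composition. -/
def comp (f : Hom Y X) (g : Hom Z Y) : Hom Z X :=
  ⟨fun p => f.map (g.map p), fun p => by rw [f.par_map, g.par_map]⟩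

/-- The induced map on plays. -/
def play (f : Hom Y X) (y : Y.Play) : X.Play :=
  ⟨fun n => f.map (y n), fun n => by rw [f.par_map, y.par_succ]⟩

theorem play_apply (f : Hom Y X) (y : Y.Play) (n : ℕ) : f.play y n = f.map (y n) := rfl

theorem openSet_preimage (f : Hom Y X) {B : Set X.Play} (hB : OpenSet B) :
    OpenSet (f.play ⁻¹' B) := by
  intro y hy
  obtain ⟨n, hn⟩ := hB _ hy
  exact ⟨n, fun z hz => hn _ (by rw [play_apply, play_apply, hz])⟩

end Hom

/-- A covering of `X` by `Y` which is an isomorphism on positions of length at most `k`: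
strategies on `Y` can be pushed forward to `X`, locally, so that plays following the image
strategy lift to plays following the original one. -/
structure Cov (k : ℕ) (Y X : Arena.{u}) extends Hom Y X where
  push : ℕ → Y.Strat → X.Strat
  push_local : ∀ (i : ℕ) (σ τ : Y.Strat) (N : ℕ), (∀ n < N, σ n = τ n) →
    ∀ n < N, push i σ n = push i τ n
  exists_lift : ∀ i < 2, ∀ (σ : Y.Strat) (x : X.Play), X.Follows i (push i σ) x →
    ∃ y : Y.Play, Y.Follows i σ y ∧ toHom.play y = x
  bijective : ∀ n ≤ k, Function.Bijective (map (n := n))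
  push_map : ∀ (i : ℕ) (σ : Y.Strat), ∀ n < k, ∀ p : Y.pos n, push i σ n (map p) = map (σ n p)

namespace Cov

variable {X Y Z : Arena.{u}} {k : ℕ}

/-- Composition of coverings. -/
def comp (c : Cov k Y X) (d : Cov k Z Y) : Cov k Z X where
  toHom := c.toHom.comp d.toHom
  push i σ := c.push i (d.push i σ)
  push_local i σ τ N h := c.push_local i _ _ N (d.push_local i σ τ N h)
  exists_lift i hi σ x hx := by
    obtain ⟨y, hy, rfl⟩ := c.exists_lift i hi _ x hx
    obtain ⟨z, hz, rfl⟩ := d.exists_lift i hi _ y hy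
    exact ⟨z, hz, rfl⟩
  bijective n hn := (c.bijective n hn).comp (d.bijective n hn)
  push_map i σ n hn p := by
    change c.push i (d.push i σ) n (c.map (d.map p)) = c.map (d.map (σ n p))
    rw [c.push_map i _ n hn, d.push_map i _ n hn]

/-- Weakening of the level of agreement. -/
def mono {l : ℕ} (c : Cov k Y X) (h : l ≤ k) : Cov l Y X where
  toHom := c.toHom
  push := c.push
  push_local := c.push_local
  exists_lift := c.exists_lift
  bijective n hn := c.bijective n (hn.trans h)
  push_map i σ n hn := c.push_map i σ n (hn.trans_le h)

end Cov

/-- In an inverse sequence of types whose maps are bijective from index `J` on, the projection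
from the inverse limit to index `J` is surjective. -/
theorem exists_coherent {J : ℕ} : ∀ {P : ℕ → Type u} (f : ∀ j, P (j + 1) → P j)
    (_ : ∀ j, J ≤ j → Function.Surjective (f j)) (p : P J),
    ∃ q : ∀ j, P j, (∀ j, f j (q (j + 1)) = q j) ∧ q J = p := by
  induction J with
  | zero =>
    intro P f hf p
    choose g hg using fun j => hf j (Nat.zero_le j)
    exact ⟨fun j => Nat.rec p (fun j r => g j r) j, fun j => hg j _, rfl⟩
  | succ J ih =>
    intro P f hf p
    obtain ⟨q, hq, hqJ⟩ := ih (P := fun j => P (j + 1)) (fun j => f (j + 1))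
      (fun j hj => hf (j + 1) (by omega)) p
    refine ⟨fun j => match j with
      | 0 => f 0 (q 0)
      | j + 1 => q j, fun j => ?_, hqJ⟩
    cases j with
    | zero => rfl
    | succ j => exact hq j

section Limit

variable {k : ℕ} {X : ℕ → Arena.{u}} (c : ∀ j, Cov (k + j) (X (j + 1)) (X j))

/-- Positions of the inverse limit are determined by a coordinate of large index. -/
theorem coherent_ext {n J : ℕ} {p q : ∀ j, (X j).pos n} (hJ : n ≤ k + J)
    (hp : ∀ j, (c j).map (p (j + 1)) = p j) (hq : ∀ j, (c j).map (q (j + 1)) = q j)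
    (h : p J = q J) : p = q := by
  have up : ∀ j, J ≤ j → p j = q j := by
    intro j hj
    induction j, hj using Nat.le_induction with
    | base => exact h
    | succ j hj ih =>
      apply ((c j).bijective n (by omega)).1
      rw [hp, hq, ih]
  have down : ∀ d j, J ≤ j + d → p j = q j := by
    intro d
    induction d with
    | zero => exact up
    | succ d ih => exact fun j hj => by rw [← hp, ← hq, ih (j + 1) (by omega)]
  exact funext fun j => down J j (by omega)

/-- The inverse limit of a sequence of coverings. -/
def limit : Arena.{u} where
  pos n := {p : ∀ j, (X j).pos n // ∀ j, (c j).map (p (j + 1)) = p j}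
  par {n} p := ⟨fun j => (X j).par (p.1 j), fun j => by rw [← (c j).par_map, p.2]⟩
  exists_child {n} p := by
    obtain ⟨r, hr⟩ := (X (n + 1)).exists_child (p.1 (n + 1))
    obtain ⟨q, hq, hqr⟩ := exists_coherent (P := fun j => (X j).pos (n + 1)) (fun j => (c j).map)
      (fun j (hj : n + 1 ≤ j) => ((c j).bijective (n + 1) (by omega)).2) r
    refine ⟨⟨q, hq⟩, Subtype.ext ?_⟩
    refine coherent_ext c (J := n + 1) (by omega) (fun j => ?_) p.2 ?_
    · rw [← (c j).par_map, hq]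
    · change (X (n + 1)).par (q (n + 1)) = _
      rw [hqr, hr]

/-- The projections of the inverse limit. -/
def limitProj (j : ℕ) : Hom (limit c) (X j) where
  map p := p.1 j
  par_map _ := rfl

theorem limitProj_bijective {n J : ℕ} (hn : n ≤ k + J) :
    Function.Bijective ((limitProj c J).map (n := n)) := by
  constructor
  · exact fun p q h => Subtype.ext (coherent_ext c hn p.2 q.2 h)
  · intro r
    obtain ⟨q, hq, hqr⟩ := exists_coherent (P := fun j => (X j).pos n) (fun j => (c j).map)
      (fun j hj => ((c j).bijective n (by omega)).2) r
    exact ⟨⟨q, hq⟩, hqr⟩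

/-- Every strategy on one term of the sequence can be pushed forward to all previous terms. -/
theorem exists_pushed (i J : ℕ) : ∀ τ : (X J).Strat, ∃ F : ∀ j, (X j).Strat,
    F J = τ ∧ ∀ j < J, F j = (c j).push i (F (j + 1)) := by
  induction J with
  | zero =>
    intro τ
    exact ⟨Function.update (fun j => Classical.arbitrary _) 0 τ, by simp, by simp⟩
  | succ J ih =>
    intro τ
    obtain ⟨F, hF, hF'⟩ := ih ((c J).push i τ)
    refine ⟨Function.update F (J + 1) τ, by simp, fun j hj => ?_⟩
    rw [Function.update_of_ne (by omega)]
    rcases Nat.lt_succ_iff_lt_or_eq.1 hj with h | rfl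
    · rw [Function.update_of_ne (by omega), hF' j h]
    · rw [Function.update_self, hF]

/-- A strategy on the inverse limit induces, on each term, a strategy that agrees with it on
short positions. -/
theorem exists_approx (ρ : (limit c).Strat) (J : ℕ) : ∃ τ : (X J).Strat,
    ∀ n < k + J, ∀ p, τ n ((limitProj c J).map p) = (limitProj c J).map (ρ n p) := by
  classical
  obtain ⟨τ₀⟩ : Nonempty (X J).Strat := inferInstance
  have hex : ∀ n (r : (X J).pos n), ∃ q, (X J).par q = r ∧
      (n < k + J → ∀ p, (limitProj c J).map p = r → q = (limitProj c J).map (ρ n p)) := by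
    intro n r
    by_cases hn : n < k + J
    · obtain ⟨p, rfl⟩ := (limitProj_bijective c hn.le).2 r
      refine ⟨(limitProj c J).map (ρ n p), ?_, fun _ p' hp' => ?_⟩
      · rw [Hom.par_map, ρ.par_apply]
      · rw [(limitProj_bijective c hn.le).1 hp']
    · exact ⟨τ₀ n r, τ₀.par_apply r, fun h => absurd h hn⟩
  choose f hf hf' using hex
  exact ⟨⟨f, hf⟩, fun n hn p => hf' n _ hn p rfl⟩

/-- A strategy on the inverse limit induces a compatible family of strategies on the terms. -/
theorem exists_compatible (i : ℕ) (F : ℕ → ∀ j, (X j).Strat)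
    (hF : ∀ J, ∀ j < J, F J j = (c j).push i (F J (j + 1)))
    (ρ : (limit c).Strat)
    (hρ : ∀ J, ∀ n < k + J, ∀ p,
      F J J n ((limitProj c J).map p) = (limitProj c J).map (ρ n p)) :
    ∀ J j, j ≤ J → ∀ J', J ≤ J' → ∀ n < k + J, F J' j n = F J j n := by
  have one : ∀ J d j, j + d = J → ∀ n < k + J, F (J + 1) j n = F J j n := by
    intro J d
    induction d with
    | zero =>
      rintro j rfl n hn
      simp only [Nat.add_zero] at hn ⊢
      rw [hF (j + 1) j (by omega)]
      funext r
      obtain ⟨p, rfl⟩ := (limitProj_bijective c hn.le).2 r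
      have h1 : (limitProj c j).map p = (c j).map ((limitProj c (j + 1)).map p) := (p.2 j).symm
      have h2 : (limitProj c j).map (ρ n p) =
        (c j).map ((limitProj c (j + 1)).map (ρ n p)) := ((ρ n p).2 j).symm
      rw [hρ j n hn, h2, h1, (c j).push_map i _ n hn, hρ (j + 1) n (by omega)]
    | succ d ih =>
      intro j hj n hn
      rw [hF (J + 1) j (by omega), hF J j (by omega)]
      exact (c j).push_local i _ _ (k + J) (fun m hm => ih (j + 1) (by omega) m hm) n hn
  intro J j hj J' hJ'
  induction J', hJ' using Nat.le_induction with
  | base => exact fun _ _ => rfl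
  | succ J' hJ' ih =>
    intro n hn
    rw [one J' (J' - j) j (by omega) n (by omega), ih n hn]

/-- The strategies on the terms of the sequence induced by a strategy on the inverse limit. -/
noncomputable def limitFamily (i : ℕ) (ρ : (limit c).Strat) (J : ℕ) : ∀ j, (X j).Strat :=
  (exists_pushed c i J (exists_approx c ρ J).choose).choose

theorem limitFamily_push (i : ℕ) (ρ : (limit c).Strat) (J j : ℕ) (hj : j < J) :
    limitFamily c i ρ J j = (c j).push i (limitFamily c i ρ J (j + 1)) :=
  (exists_pushed c i J (exists_approx c ρ J).choose).choose_spec.2 j hj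

theorem limitFamily_self (i : ℕ) (ρ : (limit c).Strat) (J n : ℕ) (hn : n < k + J)
    (p : (limit c).pos n) : limitFamily c i ρ J J n ((limitProj c J).map p) =
      (limitProj c J).map (ρ n p) := by
  have h := (exists_pushed c i J (exists_approx c ρ J).choose).choose_spec.1
  have h' := (exists_approx c ρ J).choose_spec n hn p
  rw [← h']
  exact congrArg (fun τ : (X J).Strat => τ n _) h

theorem limitFamily_stable (i : ℕ) (ρ : (limit c).Strat) {J j J' n : ℕ} (hj : j ≤ J)
    (hJ : J ≤ J') (hn : n < k + J) : limitFamily c i ρ J' j n = limitFamily c i ρ J j n :=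
  exists_compatible c i (limitFamily c i ρ) (limitFamily_push c i ρ) ρ
    (limitFamily_self c i ρ) J j hj J' hJ n hn

/-- The strategy on the `j`-th term induced by a strategy on the inverse limit. -/
noncomputable def limitPush (i : ℕ) (ρ : (limit c).Strat) (j : ℕ) : (X j).Strat :=
  ⟨fun n => limitFamily c i ρ (n + 1 + j) j n, fun _ _ => Strat.par_apply _ _⟩

theorem limitPush_eq (i : ℕ) (ρ : (limit c).Strat) {j J n : ℕ} (hj : j ≤ J) (hn : n < k + J) :
    limitPush c i ρ j n = limitFamily c i ρ J j n := by
  change limitFamily c i ρ (n + 1 + j) j n = _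
  rw [← limitFamily_stable c i ρ (J' := max (n + 1 + j) J) (by omega) (le_max_left _ _)
    (by omega), limitFamily_stable c i ρ hj (le_max_right _ _) hn]

theorem limitPush_succ (i : ℕ) (ρ : (limit c).Strat) (j : ℕ) :
    (c j).push i (limitPush c i ρ (j + 1)) = limitPush c i ρ j := by
  refine Strat.ext fun n => ?_
  rw [limitPush_eq c i ρ (J := n + 1 + j) (by omega) (by omega),
    limitFamily_push c i ρ _ j (by omega)]
  exact (c j).push_local i _ _ (n + 1)
    (fun m hm => limitPush_eq c i ρ (by omega) (by omega)) n (by omega)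

theorem limitPush_proj (i : ℕ) (ρ : (limit c).Strat) {j n : ℕ} (hn : n < k + j)
    (p : (limit c).pos n) :
    limitPush c i ρ j n ((limitProj c j).map p) = (limitProj c j).map (ρ n p) := by
  rw [limitPush_eq c i ρ le_rfl hn, limitFamily_self c i ρ j n hn]

theorem limitFamily_local (i : ℕ) {σ τ : (limit c).Strat} {N : ℕ} (h : ∀ n < N, σ n = τ n)
    (J d : ℕ) : ∀ j, j + d = J → ∀ n < N, n < k + J →
      limitFamily c i σ J j n = limitFamily c i τ J j n := by
  induction d with
  | zero =>
    rintro j rfl n hn hnk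
    funext r
    obtain ⟨p, rfl⟩ := (limitProj_bijective c hnk.le).2 r
    erw [limitFamily_self c i σ j n hnk, limitFamily_self c i τ j n hnk]
    rw [h n hn]
  | succ d ih =>
    intro j hj n hn hnk
    rw [limitFamily_push c i σ J j (by omega), limitFamily_push c i τ J j (by omega)]
    exact (c j).push_local i _ _ (min N (k + J))
      (fun m hm => ih (j + 1) (by omega) m (by omega) (by omega)) n (by omega)

/-- The inverse limit covers the first term of the sequence. -/
noncomputable def limitCov : Cov k (limit c) (X 0) where
  toHom := limitProj c 0
  push i σ := limitPush c i σ 0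
  push_local i σ τ N h n hn :=
    limitFamily_local c i h (n + 1 + 0) (n + 1 + 0) 0 (by omega) n hn (by omega)
  exists_lift i hi σ x hx := by
    have hstep : ∀ j (y : {y : (X j).Play // (X j).Follows i (limitPush c i σ j) y}),
        ∃ z : {z : (X (j + 1)).Play // (X (j + 1)).Follows i (limitPush c i σ (j + 1)) z},
          (c j).play z.1 = y.1 := by
      rintro j ⟨y, hy⟩
      rw [← limitPush_succ] at hy
      obtain ⟨z, hz, hzy⟩ := (c j).exists_lift i hi _ y hy
      exact ⟨⟨z, hz⟩, hzy⟩
    choose g hg using hstep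
    let y : ∀ j, {y : (X j).Play // (X j).Follows i (limitPush c i σ j) y} :=
      fun j => Nat.rec ⟨x, hx⟩ (fun j r => g j r) j
    have hy : ∀ j n, (c j).map ((y (j + 1)).1 n) = (y j).1 n := fun j n => by
      rw [← hg j (y j)]
      rfl
    refine ⟨⟨fun n => ⟨fun j => (y j).1 n, fun j => hy j n⟩,
      fun n => Subtype.ext (funext fun j => (y j).1.par_succ n)⟩, fun n hn => ?_, rfl⟩
    apply (limitProj_bijective c (n := n + 1) (J := n + 1) (by omega)).1
    rw [← limitPush_proj c i σ (by omega)]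
    exact (y (n + 1)).2 n hn
  bijective n hn := limitProj_bijective c (by omega)
  push_map i σ n hn p := limitPush_proj c i σ (by omega) p

end Limit

/-- A set of plays is unravelled by coverings, even after pulling it back along a map. -/
def Unravels (X : Arena.{u}) (B : Set X.Play) : Prop :=
  ∀ (Y : Arena.{u}) (f : Hom Y X) (k : ℕ), ∃ (Z : Arena.{u}) (c : Cov k Z Y),
    OpenSet ((f.comp c.toHom).play ⁻¹' B) ∧ OpenSet ((f.comp c.toHom).play ⁻¹' B)ᶜ

theorem Unravels.compl {X : Arena.{u}} {B : Set X.Play} (h : Unravels X B) : Unravels X Bᶜ := by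
  intro Y f k
  obtain ⟨Z, c, h1, h2⟩ := h Y f k
  exact ⟨Z, c, h2, by rwa [preimage_compl, compl_compl]⟩

theorem OpenSet.iUnion {X : Arena.{u}} {B : ℕ → Set X.Play} (h : ∀ j, OpenSet (B j)) :
    OpenSet (⋃ j, B j) := by
  intro x hx
  obtain ⟨j, hj⟩ := mem_iUnion.1 hx
  obtain ⟨n, hn⟩ := h j x hj
  exact ⟨n, fun y hy => mem_iUnion.2 ⟨j, hn y hy⟩⟩

/-- If open sets are unravelled, then so are countable unions of unravelled sets. -/
theorem Unravels.iUnion (hopen : ∀ (Y : Arena.{u}) (B : Set Y.Play), OpenSet B → Unravels Y B)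
    {X : Arena.{u}} {B : ℕ → Set X.Play} (h : ∀ j, Unravels X (B j)) :
    Unravels X (⋃ j, B j) := by
  intro Y f k
  choose Z c h1 h2 using fun (j : ℕ) (s : Σ Y : Arena.{u}, Hom Y X) => h j s.1 s.2 (k + j)
  let s : ℕ → Σ Y : Arena.{u}, Hom Y X :=
    fun j => Nat.rec ⟨Y, f⟩ (fun j s => ⟨Z j s, s.2.comp (c j s).toHom⟩) j
  let d : ∀ j, Cov (k + j) (s (j + 1)).1 (s j).1 := fun j => c j (s j)
  let pr : ∀ j, Hom (limit (X := fun j => (s j).1) d) (s j).1 := fun j =>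
    limitProj (X := fun j => (s j).1) d j
  have hproj : ∀ j (z : (limit (X := fun j => (s j).1) d).Play),
      (s j).2.play ((pr j).play z) = (s 0).2.play ((pr 0).play z) := by
    intro j z
    induction j with
    | zero => rfl
    | succ j ih =>
      rw [← ih]
      exact Play.ext fun n => congrArg (s j).2.map ((z n).2 j)
  have hB : ∀ j, OpenSet (((s 0).2.comp (pr 0)).play ⁻¹' B j) := by
    intro j
    have : ((s 0).2.comp (pr 0)).play ⁻¹' B j =
        (pr (j + 1)).play ⁻¹' ((s (j + 1)).2.play ⁻¹' B j) := by
      ext z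
      exact iff_of_eq (congrArg (· ∈ B j) (hproj (j + 1) z).symm)
    rw [this]
    exact (pr (j + 1)).openSet_preimage (h1 j (s j))
  obtain ⟨V, e, he1, he2⟩ := hopen _ _ (OpenSet.iUnion hB) _ (Hom.id _) k
  refine ⟨V, (limitCov (X := fun j => (s j).1) d).comp e, ?_⟩
  rw [← preimage_iUnion] at he1 he2
  exact ⟨he1, he2⟩

section Unravel

/-- The auxiliary move of the second player in the unravelling game: either a length `m`
together with a play to be followed up to that length, or a set of positions in which the play
has to stay. -/
abbrev Opt (X : Arena.{u}) : Type u := (ℕ × X.Play) ⊕ X.PosSet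

/-- Positions of `X` decorated with the auxiliary moves: a set of positions chosen together with
the move at length `K`, and an option chosen together with the move at length `K + 1`. -/
@[ext]
structure Raw (X : Arena.{u}) (K n : ℕ) : Type u where
  base : X.pos n
  fst : K < n → X.PosSet
  snd : K + 1 < n → X.Opt

variable {X : Arena.{u}}

/-- The whole arena as a set of positions. -/
def allPos (X : Arena.{u}) : X.PosSet := fun _ _ => True

/-- Forgetting the last move of a decorated position. -/
def Raw.par {K n : ℕ} (r : Raw X K (n + 1)) : Raw X K n :=
  ⟨X.par r.base, fun h => r.fst (by omega), fun h => r.snd (by omega)⟩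

/-- The decoration of a position by given auxiliary moves. -/
def deco (K : ℕ) (S : X.PosSet) (o : X.Opt) {n : ℕ} (p : X.pos n) : Raw X K n :=
  ⟨p, fun _ => S, fun _ => o⟩

theorem deco_congr {K : ℕ} {S S' : X.PosSet} {o o' : X.Opt} {n : ℕ} (p : X.pos n)
    (hS : K < n → S = S') (ho : K + 1 < n → o = o') : deco K S o p = deco K S' o' p :=
  Raw.ext rfl (funext hS) (funext ho)

/-- The positions compatible with an option. -/
def Opt.mem : X.Opt → X.PosSet
  | .inl (m, v) => fun n p => n ≤ m → p = v n
  | .inr S' => S'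

/-- `S` is closed under moves of the second player and always leaves a move to the first, at
positions longer than `K`. -/
def Good (K : ℕ) (S : X.PosSet) : Prop :=
  (∀ n, K + 1 ≤ n → n % 2 = 1 → ∀ q : X.pos (n + 1), S n (X.par q) → S (n + 1) q) ∧
  ∀ n, K + 1 ≤ n → n % 2 = 0 → ∀ p : X.pos n, S n p → ∃ q, X.par q = p ∧ S (n + 1) q

variable (D : X.PosSet)

/-- The options allowed to the second player once `S` has been chosen: a play which stays in `S`
until it reaches `D`, or a set of positions avoiding `D` which is closed under the moves of the
first player inside `S` and always leaves a move to the second player. -/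
def Opt.Allowed (K : ℕ) (S : X.PosSet) : X.Opt → Prop
  | .inl (m, v) => K + 2 ≤ m ∧ D m (v m) ∧ ∀ j, K + 1 ≤ j → j ≤ m → S j (v j)
  | .inr S' => (∀ n, K + 2 ≤ n → ∀ p : X.pos n, S' n p → S n p ∧ ¬ D n p) ∧
      (∀ n, K + 2 ≤ n → n % 2 = 1 → ∀ p : X.pos n, S' n p → ∃ q, X.par q = p ∧ S' (n + 1) q) ∧
      ∀ n, K + 2 ≤ n → n % 2 = 0 → ∀ q : X.pos (n + 1), S' n (X.par q) → S (n + 1) q →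
        S' (n + 1) q

/-- The decorated positions obeying the rules of the unravelling game. -/
structure Legal {K n : ℕ} (r : Raw X K n) : Prop where
  good : ∀ h : K < n, Good K (r.fst h) ∧ r.fst h (K + 1) (hist r.base (K + 1))
  allowed : ∀ h : K + 1 < n, Opt.Allowed D K (r.fst (by omega)) (r.snd h) ∧
    ∀ j, K + 2 ≤ j → j ≤ n → (r.snd h).mem j (hist r.base j)

variable {D} {K : ℕ}

theorem legal_deco_iff {S : X.PosSet} {o : X.Opt} (x : X.Play) {n : ℕ} :
    Legal D (deco K S o (x n)) ↔ (K < n → Good K S ∧ S (K + 1) (x (K + 1))) ∧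
      (K + 1 < n → Opt.Allowed D K S o ∧ ∀ j, K + 2 ≤ j → j ≤ n → o.mem j (x j)) := by
  constructor
  · rintro ⟨h1, h2⟩
    refine ⟨fun h => ⟨(h1 h).1, ?_⟩, fun h => ⟨(h2 h).1, fun j hj hjn => ?_⟩⟩
    · rw [← hist_play x (show K + 1 ≤ n from h)]
      exact (h1 h).2
    · rw [← hist_play x hjn]
      exact (h2 h).2 j hj hjn
  · rintro ⟨h1, h2⟩
    refine ⟨fun h => ⟨(h1 h).1, ?_⟩, fun h => ⟨(h2 h).1, fun j hj hjn => ?_⟩⟩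
    · change S (K + 1) (hist (x n) (K + 1))
      rw [hist_play x (show K + 1 ≤ n from h)]
      exact (h1 h).2
    · change o.mem j (hist (x n) j)
      rw [hist_play x hjn]
      exact (h2 h).2 j hj hjn

theorem Legal.par {n : ℕ} {r : Raw X K (n + 1)} (h : Legal D r) : Legal D r.par := by
  refine ⟨fun hn => ⟨(h.good (by omega)).1, ?_⟩, fun hn => ⟨(h.allowed (by omega)).1,
    fun j hj hjn => ?_⟩⟩
  · have := (h.good (by omega)).2
    rwa [← hist_par r.base (show K + 1 ≤ n from hn)] at this
  · have := (h.allowed (by omega)).2 j hj (by omega)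
    rwa [← hist_par r.base hjn] at this

theorem good_allPos : Good K (allPos X) :=
  ⟨fun _ _ _ _ _ => trivial, fun _ _ _ p _ => (X.exists_child p).imp fun _ h => ⟨h, trivial⟩⟩

/-- The second player always has an allowed option. -/
theorem exists_allowed (hK : K % 2 = 0) {S : X.PosSet} (hS : Good K S) {p : X.pos (K + 1)}
    (hp : S (K + 1) p) : ∃ (x : X.Play) (o : X.Opt), x (K + 1) = p ∧ Opt.Allowed D K S o ∧
      o.mem (K + 2) (x (K + 2)) := by
  by_cases h : ∃ (m : ℕ) (v : X.Play), v (K + 1) = p ∧ K + 2 ≤ m ∧ D m (v m) ∧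
      ∀ j, K + 1 ≤ j → j ≤ m → S j (v j)
  · obtain ⟨m, v, hv, hm⟩ := h
    exact ⟨v, .inl (m, v), hv, hm, fun _ => rfl⟩
  push Not at h
  let S' : X.PosSet := fun n q => ∃ v : X.Play, v (K + 1) = p ∧ v n = q ∧
    ∀ j, K + 1 ≤ j → j ≤ n → S j (v j)
  have hstep : ∀ n, K + 1 ≤ n → ∀ q : X.pos (n + 1), S' n (X.par q) → S (n + 1) q →
      S' (n + 1) q := by
    rintro n hn q ⟨v, hv, hvn, hvS⟩ hq
    have hle : ∀ j, j ≤ n → hist q j = v j := fun j hj => by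
      rw [← hist_par q hj, ← hvn, hist_play v hj]
    refine ⟨hist q, by rw [hle _ hn, hv], hist_self q, fun j hj hjn => ?_⟩
    rcases Nat.le_succ_iff.1 hjn with hjn | rfl
    · rw [hle j hjn]
      exact hvS j hj hjn
    · rwa [hist_self]
  have hbase : S' (K + 1) p := ⟨hist p, hist_self p, hist_self p, fun j hj hjn => by
    obtain rfl : j = K + 1 := by omega
    rwa [hist_self]⟩
  have hx : hist p (K + 1) = p := hist_self p
  refine ⟨hist p, .inr S', hx, ⟨fun n hn q hq => ?_, fun n hn hn2 q hq => ?_,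
    fun n hn _ q => hstep n (by omega) q⟩, ?_⟩
  · obtain ⟨v, hv, rfl, hvS⟩ := hq
    exact ⟨hvS n (by omega) le_rfl, fun hD =>
      let ⟨j, hj, hjn, hjS⟩ := h n v hv hn hD
      hjS (hvS j hj hjn)⟩
  · obtain ⟨r, rfl⟩ := X.exists_child q
    obtain ⟨v, hv, hvn, hvS⟩ := id hq
    refine ⟨r, rfl, hstep n (by omega) r hq (hS.1 n (by omega) hn2 r ?_)⟩
    rw [← hvn]
    exact hvS n (by omega) le_rfl
  · refine hstep (K + 1) le_rfl _ ?_ (hS.1 (K + 1) le_rfl (by omega) _ ?_)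
    · rwa [Play.par_succ, hx]
    · rwa [Play.par_succ, hx]

theorem Legal.exists_child (hK : K % 2 = 0) {n : ℕ} {r : Raw X K n} (hr : Legal D r) :
    ∃ q : Raw X K (n + 1), Legal D q ∧ q.par = r := by
  obtain ⟨x, hx⟩ := exists_play_through r.base
  obtain ⟨S, hS⟩ : ∃ S : X.PosSet, (∀ h : K < n, r.fst h = S) ∧ (n = K → S = allPos X) := by
    by_cases h : K < n
    · exact ⟨r.fst h, fun _ => rfl, fun h' => by omega⟩
    · exact ⟨allPos X, fun h' => absurd h' h, fun _ => rfl⟩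
  obtain ⟨o, ho⟩ : ∃ o : X.Opt, ∀ h : K + 1 < n, r.snd h = o := by
    by_cases h : K + 1 < n
    · exact ⟨r.snd h, fun _ => rfl⟩
    · exact ⟨.inr (allPos X), fun h' => absurd h' h⟩
  obtain rfl : r = deco K S o (x n) := Raw.ext hx.symm (funext hS.1) (funext ho)
  have hr' := (legal_deco_iff x).1 hr
  have key : ∀ (y : X.Play) (o' : X.Opt), y n = x n → (K + 1 < n → o' = o) →
      (K < n + 1 → Good K S ∧ S (K + 1) (y (K + 1))) →
      (K < n → Opt.Allowed D K S o' ∧ o'.mem (n + 1) (y (n + 1))) →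
      ∃ q : Raw X K (n + 1), Legal D q ∧ q.par = deco K S o (x n) := by
    intro y o' hy ho' h1 h2
    refine ⟨deco K S o' (y (n + 1)), (legal_deco_iff y).2 ⟨h1, fun h => ⟨(h2 (by omega)).1,
      fun j hj hjn => ?_⟩⟩, ?_⟩
    · rcases Nat.le_succ_iff.1 hjn with hjn | rfl
      · rw [Play.eq_of_le hjn hy, ho' (by omega)]
        exact (hr'.2 (by omega)).2 j hj hjn
      · exact (h2 (by omega)).2
    · refine Raw.ext ?_ rfl (funext ho')
      exact (y.par_succ n).trans hy
  rcases lt_trichotomy n K with hn | rfl | hn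
  · exact key x o rfl (fun _ => rfl) (fun h => by omega) (fun h => by omega)
  · refine key x o rfl (fun _ => rfl) (fun _ => ?_) (fun h => by omega)
    rw [hS.2 rfl]
    exact ⟨good_allPos, trivial⟩
  have hg := hr'.1 hn
  rcases Nat.eq_or_lt_of_le (show K + 1 ≤ n from hn) with rfl | hn'
  · obtain ⟨y, o', hy, hyo⟩ := exists_allowed (D := D) hK hg.1 hg.2
    exact key y o' hy (fun h => by omega) (fun _ => ⟨hg.1, by rw [hy]; exact hg.2⟩)
      fun _ => hyo
  have ha := hr'.2 hn'
  have fin : (∃ q, X.par q = x n ∧ o.mem (n + 1) q) →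
      ∃ q : Raw X K (n + 1), Legal D q ∧ q.par = deco K S o (x n) := by
    rintro ⟨q, hq, hqo⟩
    have hy : hist q n = x n := by rw [← Play.par_succ, hist_self, hq]
    refine key (hist q) o hy (fun _ => rfl) (fun _ => ⟨hg.1, ?_⟩) (fun _ => ⟨ha.1, ?_⟩)
    · rw [Play.eq_of_le hn hy]
      exact hg.2
    · rwa [hist_self]
  have hmem := ha.2 n hn' le_rfl
  apply fin
  match o, ha.1, hmem with
  | .inl (m, v), _, hmem =>
    by_cases hnm : n + 1 ≤ m
    · exact ⟨v (n + 1), by rw [v.par_succ, hmem (by omega)], fun _ => rfl⟩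
    · obtain ⟨q, hq⟩ := X.exists_child (x n)
      exact ⟨q, hq, fun h => absurd h hnm⟩
  | .inr S', hall, hmem =>
    rcases Nat.mod_two_eq_zero_or_one n with h2 | h2
    · obtain ⟨q, hq, hqS⟩ := hg.1.2 n hn h2 (x n) (hall.1 n hn' _ hmem).1
      exact ⟨q, hq, hall.2.2 n hn' h2 q (by rw [hq]; exact hmem) hqS⟩
    · exact hall.2.1 n hn' h2 _ hmem

variable (D) in
/-- The arena of the unravelling game. -/
def unravel (hK : K % 2 = 0) : Arena.{u} where
  pos n := {r : Raw X K n // Legal D r}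
  par r := ⟨r.1.par, r.2.par⟩
  exists_child r := by
    obtain ⟨q, hq, hqr⟩ := r.2.exists_child hK
    exact ⟨⟨q, hq⟩, Subtype.ext hqr⟩

variable {hK : K % 2 = 0}

variable (D) in
/-- Forgetting the auxiliary moves. -/
def unravelHom (hK : K % 2 = 0) : Hom (unravel D hK) X where
  map r := r.1.base
  par_map _ := rfl

theorem legal_of_le {S : X.PosSet} {o : X.Opt} {n : ℕ} (hn : n ≤ K) (p : X.pos n) :
    Legal D (deco K S o p) :=
  ⟨fun h => by omega, fun h => by omega⟩

theorem unravelHom_bijective {n : ℕ} (hn : n ≤ K) :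
    Function.Bijective ((unravelHom D hK).map (n := n)) := by
  constructor
  · intro p q h
    exact Subtype.ext (Raw.ext h (funext fun h => by omega) (funext fun h => by omega))
  · exact fun p => ⟨⟨deco K (allPos X) (.inr (allPos X)) p, legal_of_le hn p⟩, rfl⟩

variable (σ τ : (unravel D hK).Strat)

open Classical in
/-- The move of `σ` at a position decorated with given auxiliary moves. -/
noncomputable def moveAt (n : ℕ) (S : X.PosSet) (o : X.Opt) (p : X.pos n) : X.pos (n + 1) :=
  if h : Legal D (deco K S o p) then (σ n ⟨_, h⟩).1.base else (X.exists_child p).choose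

/-- The set of positions chosen by `σ` at length `K`. -/
noncomputable def fstAt (p : X.pos K) : X.PosSet :=
  (σ K ⟨deco K (allPos X) (.inr (allPos X)) p, legal_of_le le_rfl p⟩).1.fst (Nat.lt_succ_self K)

open Classical in
/-- The option chosen by `σ` at length `K + 1`. -/
noncomputable def sndAt (S : X.PosSet) (p : X.pos (K + 1)) : X.Opt :=
  if h : Legal D (deco K S (.inr (allPos X)) p) then
    (σ (K + 1) ⟨_, h⟩).1.snd (Nat.lt_succ_self (K + 1)) else .inr (allPos X)

variable {σ τ}

theorem par_moveAt {n : ℕ} (S : X.PosSet) (o : X.Opt) (p : X.pos n) :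
    X.par (moveAt σ n S o p) = p := by
  unfold moveAt
  split_ifs with h
  · have := congrArg (fun r => r.1.base) (σ.par_apply ⟨_, h⟩)
    exact this
  · exact (X.exists_child p).choose_spec

theorem moveAt_congr {n : ℕ} {S S' : X.PosSet} {o o' : X.Opt} (p : X.pos n)
    (hS : K < n → S = S') (ho : K + 1 < n → o = o') :
    moveAt σ n S o p = moveAt σ n S' o' p := by
  unfold moveAt
  rw [deco_congr p hS ho]

theorem moveAt_eq_of_eq {n : ℕ} (h : σ n = τ n) : moveAt σ n = moveAt τ n := by
  unfold moveAt
  rw [h]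

theorem fstAt_eq_of_eq (h : σ K = τ K) : fstAt σ = fstAt τ := by
  unfold fstAt
  rw [h]

theorem sndAt_eq_of_eq (h : σ (K + 1) = τ (K + 1)) : sndAt σ = sndAt τ := by
  unfold sndAt
  rw [h]

theorem move_eq_deco {S : X.PosSet} {o : X.Opt} (x : X.Play) {n : ℕ}
    (h : Legal D (deco K S o (x n))) (hS : n = K → S = fstAt σ (x K))
    (ho : n = K + 1 → o = sndAt σ S (x (K + 1))) :
    (σ n ⟨_, h⟩).1 = deco K S o (moveAt σ n S o (x n)) := by
  have hpar := congrArg Subtype.val (σ.par_apply ⟨_, h⟩)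
  have hcongr : ∀ {r r' : Raw X K n} (hr : Legal D r) (hr' : Legal D r'), r = r' →
      (σ n ⟨r, hr⟩).1 = (σ n ⟨r', hr'⟩).1 := by
    rintro r _ hr hr' rfl
    rfl
  refine Raw.ext ?_ (funext fun hn => ?_) (funext fun hn => ?_)
  · change _ = moveAt σ n S o (x n)
    unfold moveAt
    rw [dif_pos h]
  · change _ = S
    by_cases hn' : K < n
    · exact congrFun (congrArg Raw.fst hpar) hn'
    · obtain rfl : n = K := by omega
      refine Eq.trans ?_ (hS rfl).symm
      exact congrFun (congrArg Raw.fst (hcongr h (legal_of_le le_rfl _)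
        (deco_congr _ (fun h => by omega) (fun h => by omega)))) hn
  · change _ = o
    by_cases hn' : K + 1 < n
    · exact congrFun (congrArg Raw.snd hpar) hn'
    · obtain rfl : n = K + 1 := by omega
      have h' : deco K S o (x (K + 1)) = deco K S (.inr (allPos X)) (x (K + 1)) :=
        deco_congr _ (fun _ => rfl) (fun h => by omega)
      refine Eq.trans ?_ (ho rfl).symm
      unfold sndAt
      rw [dif_pos (h' ▸ h)]
      exact congrFun (congrArg Raw.snd (hcongr h (h' ▸ h) h')) hn

theorem legal_succ {S : X.PosSet} {o : X.Opt} (x : X.Play) {n : ℕ}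
    (h : Legal D (deco K S o (x n))) (hS : n = K → S = fstAt σ (x K))
    (ho : n = K + 1 → o = sndAt σ S (x (K + 1))) :
    Legal D (deco K S o (moveAt σ n S o (x n))) := by
  rw [← move_eq_deco x h hS ho]
  exact (σ n ⟨_, h⟩).2

/-- A play decorated with suitable auxiliary moves follows `σ`. -/
theorem exists_lift_of_moveAt {i : ℕ} {S : X.PosSet} {o : X.Opt} (x : X.Play)
    (hleg : ∀ n, Legal D (deco K S o (x n)))
    (hmove : ∀ n, n % 2 = i → x (n + 1) = moveAt σ n S o (x n))
    (hS : K % 2 = i → S = fstAt σ (x K))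
    (ho : (K + 1) % 2 = i → o = sndAt σ S (x (K + 1))) :
    ∃ y : (unravel D hK).Play, (unravel D hK).Follows i σ y ∧ (unravelHom D hK).play y = x := by
  refine ⟨⟨fun n => ⟨deco K S o (x n), hleg n⟩, fun n => Subtype.ext ?_⟩, fun n hn => ?_, rfl⟩
  · exact Raw.ext (x.par_succ n) rfl rfl
  · refine Subtype.ext ?_
    change deco K S o (x (n + 1)) = (σ n ⟨deco K S o (x n), hleg n⟩).1
    rw [move_eq_deco x (hleg n) (fun h => hS (h ▸ hn)) (fun h => ho (h ▸ hn)), hmove n hn]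

/-- Before its final length, the first kind of option forces the moves. -/
theorem moveAt_forced {S : X.PosSet} {m : ℕ} {v : X.Play} (x : X.Play) {n : ℕ}
    (h : Legal D (deco K S (.inl (m, v)) (x n))) (hn : K < n)
    (ho : n = K + 1 → .inl (m, v) = sndAt σ S (x (K + 1))) (hnm : n < m) :
    moveAt σ n S (.inl (m, v)) (x n) = v (n + 1) := by
  have := ((legal_succ x h (fun h => by omega) ho).allowed (by omega)).2 (n + 1) (by omega) le_rfl
  change n + 1 ≤ m → hist (moveAt σ n S (.inl (m, v)) (x n)) (n + 1) = v (n + 1) at this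
  rw [← this hnm, hist_self]

end Unravel

section Hybrid

/-- The data used to imitate a strategy for the unravelling game from length `K + 1` on: the
player tries to reach `target`, staying in `region`; the auxiliary moves are taken to be
`default` until it is possible to reach `target`, and `final` once it has been reached. -/
structure Plan (X : Arena.{u}) : Type u where
  region : X.PosSet
  target : X.PosSet
  default : X.PosSet × X.Opt
  final : ∀ m, X.pos m → X.PosSet × X.Opt

variable {X : Arena.{u}} {D : X.PosSet} {K : ℕ} {hK : K % 2 = 0}

/-- The positions from which the target of the plan can be reached. -/
def Plan.Reach (i : ℕ) (P : X.Plan) : X.PosSet := Arena.Reach i P.region P.target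

open Classical in
/-- The move at a position `p` of the strategy imitating `σ` according to a plan. -/
noncomputable def hybridMove (i : ℕ) (σ : (unravel D hK).Strat) (P : X.pos (K + 1) → X.Plan)
    (n : ℕ) (p : X.pos n) : X.pos (n + 1) :=
  if n ≤ K then moveAt σ n (allPos X) (.inr (allPos X)) p
  else
    let Q := P (hist p (K + 1))
    if h : ∃ m, m ≤ n ∧ Q.target m (hist p m) then
      moveAt σ n (Q.final (Nat.find h) (hist p (Nat.find h))).1
        (Q.final (Nat.find h) (hist p (Nat.find h))).2 p
    else if Q.Reach i n p then reachStrat i Q.region Q.target n p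
    else moveAt σ n Q.default.1 Q.default.2 p

/-- The strategy imitating `σ` according to a plan depending on the position of length `K + 1`. -/
noncomputable def hybrid (i : ℕ) (σ : (unravel D hK).Strat) (P : X.pos (K + 1) → X.Plan) :
    X.Strat where
  move := hybridMove i σ P
  par_move n p := by
    unfold hybridMove
    dsimp only
    split_ifs
    · exact par_moveAt _ _ _
    · exact par_moveAt _ _ _
    · exact (reachStrat _ _ _).par_apply _
    · exact par_moveAt _ _ _

theorem hybrid_congr {i n : ℕ} {σ τ : (unravel D hK).Strat} {P Q : X.pos (K + 1) → X.Plan}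
    (h : σ n = τ n) (hP : K < n → P = Q) : hybrid i σ P n = hybrid i τ Q n := by
  funext p
  change hybridMove i σ P n p = hybridMove i τ Q n p
  unfold hybridMove
  rw [moveAt_eq_of_eq h]
  by_cases hn : n ≤ K
  · rw [if_pos hn, if_pos hn]
  · rw [hP (by omega)]

variable {i : ℕ} {σ : (unravel D hK).Strat} {P : X.pos (K + 1) → X.Plan} {x : X.Play}

theorem hybrid_of_le (hx : X.Follows i (hybrid i σ P) x) {n : ℕ} (hn : n % 2 = i) (h : n ≤ K)
    (S : X.PosSet) (o : X.Opt) : x (n + 1) = moveAt σ n S o (x n) := by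
  rw [hx n hn]
  change hybridMove i σ P n (x n) = _
  unfold hybridMove
  rw [if_pos h]
  exact moveAt_congr _ (fun h => by omega) fun h => by omega

theorem hybrid_of_gt (hx : X.Follows i (hybrid i σ P) x) {n : ℕ} (hn : n % 2 = i) (h : K < n)
    (hU : ∀ m ≤ n, ¬ (P (x (K + 1))).target m (x m)) :
    ((P (x (K + 1))).Reach i n (x n) →
      x (n + 1) = reachStrat i (P (x (K + 1))).region (P (x (K + 1))).target n (x n)) ∧
    (¬ (P (x (K + 1))).Reach i n (x n) → x (n + 1) =
      moveAt σ n (P (x (K + 1))).default.1 (P (x (K + 1))).default.2 (x n)) := by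
  have hU' : ¬ ∃ m, m ≤ n ∧ (P (hist (x n) (K + 1))).target m (hist (x n) m) := by
    rintro ⟨m, hm, hmU⟩
    rw [hist_play x hm, hist_play x h] at hmU
    exact hU m hm hmU
  have key : x (n + 1) = hybridMove i σ P n (x n) := hx n hn
  unfold hybridMove at key
  dsimp only at key
  rw [if_neg (by omega), dif_neg hU', hist_play x h] at key
  constructor <;> intro hr
  · rwa [if_pos hr] at key
  · rwa [if_neg hr] at key

theorem hybrid_of_target (hx : X.Follows i (hybrid i σ P) x) {n m : ℕ} (hn : n % 2 = i)
    (h : K < n) (hmn : m ≤ n) (hm : (P (x (K + 1))).target m (x m))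
    (hU : ∀ j < m, ¬ (P (x (K + 1))).target j (x j)) :
    x (n + 1) = moveAt σ n ((P (x (K + 1))).final m (x m)).1
      ((P (x (K + 1))).final m (x m)).2 (x n) := by
  classical
  have hP : P (hist (x n) (K + 1)) = P (x (K + 1)) := by rw [hist_play x h]
  have hmU : (P (hist (x n) (K + 1))).target m (hist (x n) m) := by rwa [hist_play x hmn, hP]
  have hex : ∃ m, m ≤ n ∧ (P (hist (x n) (K + 1))).target m (hist (x n) m) := ⟨m, hmn, hmU⟩
  have hfind : Nat.find hex = m := by
    refine (Nat.find_eq_iff hex).2 ⟨⟨hmn, hmU⟩, fun j hj => ?_⟩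
    rintro ⟨hjn, hjU⟩
    rw [hist_play x hjn, hP] at hjU
    exact hU j hj hjU
  have hfinal : ∀ j, j = m → (P (hist (x n) (K + 1))).final j (hist (x n) j) =
      (P (x (K + 1))).final m (x m) := by
    rintro _ rfl
    rw [hist_play x hmn, hP]
  have key : x (n + 1) = hybridMove i σ P n (x n) := hx n hn
  unfold hybridMove at key
  dsimp only at key
  rw [if_neg (by omega), dif_pos hex, hfinal] at key
  · exact key
  · convert hfind

theorem hybrid_reach_succ (hx : X.Follows i (hybrid i σ P) x) {n : ℕ} (h : K < n)
    (hU : ∀ m ≤ n, ¬ (P (x (K + 1))).target m (x m)) (hr : (P (x (K + 1))).Reach i n (x n)) :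
    (P (x (K + 1))).Reach i (n + 1) (x (n + 1)) := by
  rw [← x.par_succ n] at hr
  obtain ⟨β, -, hβ⟩ := Reach.exists_lt hr (by rw [x.par_succ]; exact hU n le_rfl) fun hn => by
    rw [x.par_succ] at hr ⊢
    exact (hybrid_of_gt hx hn h hU).1 hr
  exact ⟨β, hβ⟩

theorem hybrid_not_reach (hx : X.Follows i (hybrid i σ P) x) {n : ℕ}
    (hU : ∀ m < n, ¬ (P (x (K + 1))).target m (x m))
    (hr : ¬ (P (x (K + 1))).Reach i n (x n)) {j : ℕ} (hj : K < j) (hjn : j ≤ n) :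
    ¬ (P (x (K + 1))).Reach i j (x j) := by
  refine fun hj' => hr ?_
  induction n, hjn using Nat.le_induction with
  | base => exact hj'
  | succ n hjn ih =>
    have hU' : ∀ m ≤ n, ¬ (P (x (K + 1))).target m (x m) := fun m hm => hU m (by omega)
    refine hybrid_reach_succ hx (by omega) hU' ?_
    by_contra hn
    exact hn (ih (fun m hm => hU' m hm.le) hn)

/-- Either the target is never reachable, or there is a first length at which it is reached. -/
theorem hybrid_cases (hx : X.Follows i (hybrid i σ P) x) :
    (∀ n, K < n → ¬ (P (x (K + 1))).Reach i n (x n)) ∨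
    ∃ m, (P (x (K + 1))).target m (x m) ∧ ∀ j < m, ¬ (P (x (K + 1))).target j (x j) := by
  classical
  by_cases h : ∃ n, K < n ∧ (P (x (K + 1))).Reach i n (x n)
  · obtain ⟨n, hn, hr⟩ := h
    have hex := Reach.exists_mem hr fun j hj hjr hU hji =>
      (hybrid_of_gt hx hji (by omega) hU).1 hjr
    exact Or.inr ⟨Nat.find hex, Nat.find_spec hex, fun j hj => Nat.find_min hex hj⟩
  · push Not at h
    exact Or.inl h

end Hybrid

section Imitation

variable {X : Arena.{u}} {D : X.PosSet} {K : ℕ} {hK : K % 2 = 0}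
  (σ : (unravel D hK).Strat)

/-- The positions longer than `K + 1` lying in `D`. -/
def late (K : ℕ) (D : X.PosSet) : X.PosSet := fun n p => K + 2 ≤ n ∧ D n p

/-- The part of `S` from which the first player cannot force the play into `D`. -/
def safePart (K : ℕ) (D S : X.PosSet) : X.PosSet :=
  fun n p => S n p ∧ ¬ Reach 0 S (late K D) n p

/-- The plan of the first player. -/
noncomputable def planFst (p : X.pos (K + 1)) : X.Plan where
  region := fstAt σ (X.par p)
  target := late K D
  default := (fstAt σ (X.par p), .inr (safePart K D (fstAt σ (X.par p))))
  final m u := (fstAt σ (X.par p), .inl (m, hist u))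

/-- The positions that the second player, choosing options by `s`, may propose to reach. -/
def proposed (D : X.PosSet) (s : X.PosSet → X.pos (K + 1) → X.Opt) (p : X.pos (K + 1)) :
    X.PosSet := fun m q => ∃ (S : X.PosSet) (v : X.Play),
  Legal D (deco K S (.inr (allPos X)) p) ∧ s S p = .inl (m, v) ∧ v m = q

/-- The positions from which the second player cannot force the play into a position that he
may propose to reach. -/
def unreachable (D : X.PosSet) (s : X.PosSet → X.pos (K + 1) → X.Opt) (p : X.pos (K + 1)) :
    X.PosSet := fun n q => ¬ Reach 1 (allPos X) (proposed D s p) n q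

open Classical in
/-- The plan of the second player. -/
noncomputable def planSnd (D : X.PosSet) (s : X.PosSet → X.pos (K + 1) → X.Opt)
    (p : X.pos (K + 1)) : X.Plan where
  region := allPos X
  target := proposed D s p
  default := (unreachable D s p, s (unreachable D s p) p)
  final m q := if h : proposed D s p m q then (h.choose, .inl (m, h.choose_spec.choose))
    else (allPos X, .inr (allPos X))

variable {σ}

theorem planFst_eq (x : X.Play) : planFst σ (x (K + 1)) = ⟨fstAt σ (x K), late K D,
    (fstAt σ (x K), .inr (safePart K D (fstAt σ (x K)))),
    fun m u => (fstAt σ (x K), .inl (m, hist u))⟩ := by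
  unfold planFst
  rw [x.par_succ]

theorem allowed_safePart {S : X.PosSet} (hS : Good K S) :
    Opt.Allowed D K S (.inr (safePart K D S)) := by
  refine ⟨fun n hn p hp => ⟨hp.1, fun hD => not_mem_of_not_reach hp.2 ⟨hn, hD⟩⟩,
    fun n hn h2 p hp => ?_, fun n hn h2 q hq hqS => ⟨hqS, not_reach_of_own hq.2 h2 hqS⟩⟩
  obtain ⟨q, rfl, hqr⟩ := exists_not_reach_of_opp hp.2 (by omega)
  exact ⟨q, rfl, hS.1 n (by omega) h2 q hp.1, hqr⟩

theorem exists_lift_fst (x : X.Play) (hx : X.Follows 0 (hybrid 0 σ (planFst σ)) x) :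
    ∃ y : (unravel D hK).Play, (unravel D hK).Follows 0 σ y ∧ (unravelHom D hK).play y = x := by
  have hle := fun n hn h => hybrid_of_le hx (n := n) hn h (fstAt σ (x K))
  have hgt := fun n hn h => hybrid_of_gt hx (n := n) hn h
  have htarget := fun n m hn h hmn => hybrid_of_target hx (n := n) (m := m) hn h hmn
  have hnot := fun n => hybrid_not_reach hx (n := n)
  have hcases := hybrid_cases hx
  simp only [planFst_eq, Plan.Reach] at hgt htarget hnot hcases
  clear hx
  generalize hS₀ : fstAt σ (x K) = S at *
  have hfirst : Good K S ∧ S (K + 1) (x (K + 1)) := by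
    have hleg : Legal D (deco K S (.inr (allPos X)) (x K)) := legal_of_le le_rfl _
    have := legal_succ (σ := σ) x hleg (fun _ => hS₀.symm) (fun h => by omega)
    rw [← hle K hK le_rfl] at this
    exact ((legal_deco_iff x).1 this).1 (by omega)
  have hallowed : Opt.Allowed D K S (.inr (safePart K D S)) := allowed_safePart hfirst.1
  have hmem : ∀ j, K + 1 ≤ j → (∀ m < j, ¬ late K D m (x m)) → S j (x j) := by
    intro j hj
    induction j using Nat.strong_induction_on with
    | _ j ih =>
      intro hU
      obtain rfl | ⟨j, rfl, hj'⟩ : j = K + 1 ∨ ∃ n, j = n + 1 ∧ K + 1 ≤ n := by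
        rcases Nat.eq_or_lt_of_le hj with h | h
        · exact Or.inl h.symm
        · exact Or.inr ⟨j - 1, by omega, by omega⟩
      · exact hfirst.2
      have hSj : ∀ n, K + 1 ≤ n → n ≤ j → S n (x n) := fun n hn hnj =>
        ih n (by omega) hn fun m hm => hU m (by omega)
      rcases Nat.mod_two_eq_zero_or_one j with h2 | h2
      · by_cases hr : Reach 0 S (late K D) j (x j)
        · rw [(hgt j h2 (by omega) fun m hm => hU m (by omega)).1 hr]
          exact (reachStrat_spec hr (hU j (by omega)) h2).1
        · have hleg : Legal D (deco K S (.inr (safePart K D S)) (x j)) :=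
            (legal_deco_iff x).2 ⟨fun _ => hfirst, fun _ => ⟨hallowed, fun n hn hnj =>
              ⟨hSj n (by omega) hnj,
                hnot j (fun m hm => hU m (by omega)) hr (by omega) hnj⟩⟩⟩
          have := legal_succ (σ := σ) x hleg (fun h => by omega) (fun h => by omega)
          rw [← (hgt j h2 (by omega) fun m hm => hU m (by omega)).2 hr] at this
          exact (((legal_deco_iff x).1 this).2 (by omega)).2 (j + 1) (by omega) le_rfl |>.1
      · refine hfirst.1.1 j hj' h2 _ ?_
        rw [x.par_succ]
        exact hSj j hj' le_rfl
  rcases hcases with h | ⟨m, hm, hmin⟩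
  · have hU : ∀ m, ¬ late K D m (x m) := fun m hm =>
      h m (by have := hm.1; omega) ⟨0, .base hm⟩
    refine exists_lift_of_moveAt (S := S) (o := .inr (safePart K D S)) x
      (fun n => (legal_deco_iff x).2 ⟨fun _ => hfirst, fun _ => ⟨hallowed, fun j hj _ =>
        ⟨hmem j (by omega) fun m _ => hU m, h j (by omega)⟩⟩⟩) (fun n hn => ?_)
      (fun _ => hS₀.symm) (fun h => by omega)
    by_cases hnK : n ≤ K
    · exact hle n hn hnK _
    · exact (hgt n hn (by omega) fun m _ => hU m).2 (h n (by omega))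
  · have hleg : ∀ n, Legal D (deco K S (.inl (m, hist (x m))) (x n)) := fun n =>
      (legal_deco_iff x).2 ⟨fun _ => hfirst, fun _ => ⟨⟨hm.1, by rw [hist_self]; exact hm.2,
        fun j hj hjm => by
          rw [hist_play x hjm]
          exact hmem j hj fun l hl => hmin l (by omega)⟩,
        fun j _ _ hjm => (hist_play x hjm).symm⟩⟩
    refine exists_lift_of_moveAt (S := S) (o := .inl (m, hist (x m))) x hleg
      (fun n hn => ?_) (fun _ => hS₀.symm) (fun h => by omega)
    by_cases hnK : n ≤ K
    · exact hle n hn hnK _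
    by_cases hnm : n < m
    · rw [moveAt_forced x (hleg n) (by omega) (fun h => by omega) hnm, hist_play x hnm]
    · exact htarget n m hn (by omega) (by omega) hm hmin

theorem allowed_sndAt {S : X.PosSet} {p : X.pos (K + 1)}
    (h : Legal D (deco K S (.inr (allPos X)) p)) : Opt.Allowed D K S (sndAt σ S p) := by
  obtain ⟨x, rfl⟩ := exists_play_through p
  have h' : Legal D (deco K S (sndAt σ S (x (K + 1))) (x (K + 1))) := by
    rwa [deco_congr (o' := .inr (allPos X)) _ (fun _ => rfl) fun h => by omega]
  exact ((legal_succ x h' (fun h => by omega) fun _ => rfl).allowed (by omega)).1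

theorem good_unreachable (s : X.PosSet → X.pos (K + 1) → X.Opt) (p : X.pos (K + 1)) :
    Good K (unreachable D s p) :=
  ⟨fun _ _ h2 _ hq => not_reach_of_own hq h2 trivial,
    fun _ _ h2 _ hp => exists_not_reach_of_opp hp (by omega)⟩

theorem exists_lift_snd (x : X.Play) (hx : X.Follows 1 (hybrid 1 σ (planSnd D (sndAt σ))) x) :
    ∃ y : (unravel D hK).Play, (unravel D hK).Follows 1 σ y ∧ (unravelHom D hK).play y = x := by
  have hlate : ∀ m (q : X.pos m), proposed D (sndAt σ) (x (K + 1)) m q → K + 2 ≤ m := by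
    rintro m q ⟨S, v, hleg, hv, -⟩
    have := allowed_sndAt (σ := σ) hleg
    rw [hv] at this
    exact this.1
  rcases hybrid_cases hx with h | ⟨m, hm, hmin⟩
  · have hU : ∀ m, ¬ proposed D (sndAt σ) (x (K + 1)) m (x m) := fun m hm =>
      h m (by have := hlate m _ hm; omega) ⟨0, .base hm⟩
    have hmem : ∀ n, K < n → unreachable D (sndAt σ) (x (K + 1)) n (x n) := h
    have hmove : ∀ n, n % 2 = 1 → K < n → x (n + 1) =
        moveAt σ n (unreachable D (sndAt σ) (x (K + 1)))
        (sndAt σ (unreachable D (sndAt σ) (x (K + 1))) (x (K + 1))) (x n) := fun n hn hnK =>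
      (hybrid_of_gt hx hn hnK fun m _ => hU m).2 (h n hnK)
    have hgood := good_unreachable (D := D) (sndAt σ) (x (K + 1))
    have hle := fun n hn h => hybrid_of_le hx (n := n) hn h
    clear hx h
    generalize hS : unreachable D (sndAt σ) (x (K + 1)) = S at *
    have hleg₀ : ∀ o : X.Opt, Legal D (deco K S o (x (K + 1))) := fun o =>
      (legal_deco_iff x).2 ⟨fun _ => ⟨hgood, hmem _ (by omega)⟩, fun h => by omega⟩
    have hallowed := allowed_sndAt (σ := σ) (hleg₀ (.inr (allPos X)))
    generalize ho : sndAt σ S (x (K + 1)) = o at *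
    match o with
    | .inl (m, v) =>
      refine absurd ⟨0, .base ⟨S, v, hleg₀ _, ho, rfl⟩⟩
        (?_ : unreachable D (sndAt σ) (x (K + 1)) m (v m))
      rw [hS]
      have := hallowed.1
      exact hallowed.2.2 m (by omega) le_rfl
    | .inr S' =>
      have hS' : ∀ n, K + 2 ≤ n → S' n (x n) := by
        have hstep : ∀ n, n % 2 = 1 → K < n → Legal D (deco K S (.inr S') (x n)) →
            S' (n + 1) (x (n + 1)) := fun n hn hnK hleg => by
          have := legal_succ x hleg (fun h => by omega) fun _ => ho.symm
          rw [← hmove n hn hnK] at this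
          exact (((legal_deco_iff x).1 this).2 (by omega)).2 (n + 1) (by omega) le_rfl
        intro n hn
        induction n using Nat.strong_induction_on with
        | _ n ih =>
          obtain rfl | ⟨n, rfl, hn'⟩ : n = K + 2 ∨ ∃ k, n = k + 1 ∧ K + 2 ≤ k := by
            rcases Nat.eq_or_lt_of_le hn with h | h
            · exact Or.inl h.symm
            · exact Or.inr ⟨n - 1, by omega, by omega⟩
          · exact hstep (K + 1) (by omega) (by omega) (hleg₀ _)
          · rcases Nat.mod_two_eq_zero_or_one n with h2 | h2
            · refine hallowed.2.2 n hn' h2 _ ?_ (hmem _ (by omega))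
              rw [x.par_succ]
              exact ih n (by omega) hn'
            · exact hstep n h2 (by omega) ((legal_deco_iff x).2
                ⟨fun _ => ⟨hgood, hmem _ (by omega)⟩, fun _ => ⟨hallowed,
                  fun j hj hjn => ih j (by omega) hj⟩⟩)
      refine exists_lift_of_moveAt (S := S) (o := .inr S') x
        (fun n => (legal_deco_iff x).2 ⟨fun _ => ⟨hgood, hmem _ (by omega)⟩, fun _ => ⟨hallowed,
          fun j hj _ => hS' j hj⟩⟩) (fun n hn => ?_) (fun h => by omega) (fun _ => ho.symm)
      by_cases hnK : n ≤ K
      · exact hle n hn hnK _ _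
      · exact hmove n hn (by omega)
  · have hle := fun n hn h => hybrid_of_le hx (n := n) hn h
    have htarget := fun n hn h hmn => hybrid_of_target hx (n := n) (m := m) hn h hmn hm hmin
    have hm' : proposed D (sndAt σ) (x (K + 1)) m (x m) := hm
    obtain ⟨S, v, hfinal, hleg₀, ho, hv⟩ : ∃ (S : X.PosSet) (v : X.Play),
        (planSnd D (sndAt σ) (x (K + 1))).final m (x m) = (S, .inl (m, v)) ∧
        Legal D (deco K S (.inr (allPos X)) (x (K + 1))) ∧
        sndAt σ S (x (K + 1)) = .inl (m, v) ∧ v m = x m :=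
      ⟨_, _, dif_pos hm', hm'.choose_spec.choose_spec⟩
    rw [hfinal] at htarget
    have hmK := hlate m _ hm'
    have hallowed := allowed_sndAt (σ := σ) hleg₀
    rw [ho] at hallowed
    have hleg : ∀ n, Legal D (deco K S (.inl (m, v)) (x n)) := fun n =>
      (legal_deco_iff x).2 ⟨fun _ => ((legal_deco_iff x).1 hleg₀).1 (by omega),
        fun _ => ⟨hallowed, fun j _ _ hjm => (Play.eq_of_le hjm hv).symm⟩⟩
    refine exists_lift_of_moveAt (S := S) (o := .inl (m, v)) x hleg (fun n hn => ?_)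
      (fun h => by omega) (fun _ => ho.symm)
    by_cases hnK : n ≤ K
    · exact hle n hn hnK _ _
    by_cases hnm : n < m
    · rw [moveAt_forced x (hleg n) (by omega) (fun _ => ho.symm) hnm]
      exact (Play.eq_of_le hnm hv).symm
    · exact htarget n hn (by omega) (by omega)

end Imitation

/-- The unravelling game covers the original one. -/
noncomputable def unravelCov {X : Arena.{u}} (D : X.PosSet) {K : ℕ} (hK : K % 2 = 0) :
    Cov K (unravel D hK) X where
  toHom := unravelHom D hK
  push i σ := hybrid i σ (if i = 0 then planFst σ else planSnd D (sndAt σ))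
  push_local i σ τ N h n hn := by
    refine hybrid_congr (h n hn) fun hKn => ?_
    have hfst : planFst σ = planFst τ := by
      unfold planFst
      rw [fstAt_eq_of_eq (h K (by omega))]
    rw [hfst, sndAt_eq_of_eq (h (K + 1) (by omega))]
  exists_lift i hi σ x hx := by
    obtain rfl | rfl : i = 0 ∨ i = 1 := by omega
    · exact exists_lift_fst x hx
    · exact exists_lift_snd x hx
  bijective n hn := unravelHom_bijective hn
  push_map i σ n hn p := by
    obtain ⟨x, hx⟩ := exists_play_through p.1.base
    obtain ⟨r, hr⟩ := p
    obtain rfl : r = deco K (allPos X) (.inr (allPos X)) (x n) :=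
      Raw.ext hx.symm (funext fun h => by omega) (funext fun h => by omega)
    change hybridMove i σ _ n (x n) = (σ n ⟨_, hr⟩).1.base
    rw [move_eq_deco x hr (fun h => by omega) (fun h => by omega)]
    exact if_pos hn.le

theorem unravelHom_snd {X : Arena.{u}} {D : X.PosSet} {K : ℕ} {hK : K % 2 = 0}
    (y : (unravel D hK).Play) {n : ℕ} (hn : K + 1 < n) :
    (y n).1.snd hn = (y (K + 2)).1.snd (by omega) := by
  induction n, (show K + 2 ≤ n from hn) using Nat.le_induction with
  | base => rfl
  | succ n hn' ih =>
    rw [← ih hn', ← y.par_succ n]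
    rfl

/-- Open sets can be unravelled. -/
theorem OpenSet.unravels {X : Arena.{u}} {B : Set X.Play} (hB : OpenSet B) : Unravels X B := by
  intro Y f k
  replace hB := f.openSet_preimage hB
  let D : Y.PosSet := fun n p => ∀ y : Y.Play, y n = p → y ∈ f.play ⁻¹' B
  have hDmono : ∀ (y : Y.Play) {m n : ℕ}, m ≤ n → D m (y m) → D n (y n) :=
    fun y m n hmn hD z hz => hD z (Play.eq_of_le hmn hz)
  have hK : (2 * k) % 2 = 0 := by omega
  refine ⟨unravel D hK, (unravelCov D hK).mono (by omega), ?_⟩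
  have key : ∀ y : (unravel D hK).Play, (f.comp (unravelHom D hK)).play y ∈ B ↔
      ((y (2 * k + 2)).1.snd (by omega)).isLeft := by
    intro y
    obtain ⟨o, ho⟩ : ∃ o : Y.Opt, (y (2 * k + 2)).1.snd (by omega) = o := ⟨_, rfl⟩
    have hall : ∀ n, 2 * k + 1 < n → (∃ S : Y.PosSet, Opt.Allowed D (2 * k) S o) ∧
        o.mem n (y n).1.base := fun n h => by
      have := (y n).2.allowed h
      rw [unravelHom_snd y h, ho] at this
      have hmem := this.2 n h le_rfl
      rw [hist_self] at hmem
      exact ⟨⟨_, this.1⟩, hmem⟩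
    rw [ho]
    clear ho
    match o, hall with
    | .inl (m, v), hall =>
      obtain ⟨S, hm, hD, -⟩ := (hall (2 * k + 2) (by omega)).1
      have hbase := (hall m (by omega)).2 le_rfl
      rw [← hbase] at hD
      exact ⟨fun _ => rfl, fun _ => hD ((unravelHom D hK).play y) rfl⟩
    | .inr S', hall =>
      refine ⟨fun hy => ?_, fun h => by cases h⟩
      obtain ⟨n, hn⟩ := hB ((unravelHom D hK).play y) hy
      have hD := hDmono ((unravelHom D hK).play y) (show n ≤ n + (2 * k + 2) by omega) hn
      obtain ⟨⟨S, hS⟩, hmem⟩ := hall (n + (2 * k + 2)) (by omega)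
      exact absurd hD (hS.1 _ (by omega) _ hmem).2
  constructor
  · intro y hy
    refine ⟨2 * k + 2, fun z hz => (key z).2 ?_⟩
    rw [hz]
    exact (key y).1 hy
  · intro y hy
    refine ⟨2 * k + 2, fun z hz hzB => hy ((key y).2 ?_)⟩
    rw [← hz]
    exact (key z).1 hzB

/-- Sets which can be unravelled are determined. -/
theorem Unravels.determined {X : Arena.{u}} [Subsingleton (X.pos 0)] {B : Set X.Play}
    (h : Unravels X B) : (∃ σ : X.Strat, ∀ x, X.Follows 0 σ x → x ∈ B) ∨
      ∃ σ : X.Strat, ∀ x, X.Follows 1 σ x → x ∉ B := by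
  obtain ⟨Z, c, hopen, -⟩ := h X (Hom.id X) 0
  have : Subsingleton (Z.pos 0) := (c.bijective 0 le_rfl).1.subsingleton
  refine hopen.determined.imp ?_ ?_
  · rintro ⟨σ, hσ⟩
    refine ⟨c.push 0 σ, fun x hx => ?_⟩
    obtain ⟨y, hy, rfl⟩ := c.exists_lift 0 (by omega) σ x hx
    exact hσ y hy
  · rintro ⟨σ, hσ⟩
    refine ⟨c.push 1 σ, fun x hx => ?_⟩
    obtain ⟨y, hy, rfl⟩ := c.exists_lift 1 (by omega) σ x hx
    exact hσ y hy

end Arena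

section Tree

variable {A : Type u} {T : Set (List A)}

theorem ofFn_succ_eq_append (x : ℕ → A) (n : ℕ) :
    (List.ofFn fun i : Fin (n + 1) => x i) = (List.ofFn fun i : Fin n => x i) ++ [x n] := by
  rw [List.ofFn_succ', List.concat_eq_append]
  rfl

/-- The arena of a tree. -/
def treeArena (hT : IsTree T) : Arena.{u} where
  pos n := {p : List A // p ∈ T ∧ p.length = n}
  par p := ⟨p.1.dropLast, hT.2.1 _ p.2.1 _
    ⟨_, List.dropLast_append_getLast (List.ne_nil_of_length_eq_add_one p.2.2)⟩, by
    rw [List.length_dropLast, p.2.2, Nat.add_sub_cancel]⟩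
  exists_child p := by
    obtain ⟨a, ha⟩ := hT.2.2 _ p.2.1
    exact ⟨⟨p.1 ++ [a], ha, by rw [List.length_append, p.2.2, List.length_singleton]⟩,
      Subtype.ext List.dropLast_concat⟩

variable (hT : IsTree T)

instance : Subsingleton ((treeArena hT).pos 0) :=
  ⟨fun p q => Subtype.ext (by
    rw [List.length_eq_zero_iff.1 p.2.2, List.length_eq_zero_iff.1 q.2.2])⟩

/-- The play of the arena given by an element of the canopy. -/
def toPlay (x : canopy T) : (treeArena hT).Play where
  seq n := ⟨List.ofFn fun i : Fin n => x.1 i, x.2 n, List.length_ofFn⟩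
  par_succ n := Subtype.ext (by
    change (List.ofFn fun i : Fin (n + 1) => x.1 i).dropLast = _
    rw [ofFn_succ_eq_append, List.dropLast_concat])

theorem append_of_par {n : ℕ} (q : (treeArena hT).pos (n + 1)) :
    ∃ a : A, ((treeArena hT).par q).1 ++ [a] = q.1 :=
  ⟨q.1.getLast (List.ne_nil_of_length_eq_add_one q.2.2), List.dropLast_append_getLast _⟩

theorem exists_eq_toPlay (y : (treeArena hT).Play) : ∃ x : canopy T, toPlay hT x = y := by
  choose a ha using fun n => append_of_par hT (y (n + 1))
  have key : ∀ n, (List.ofFn fun i : Fin n => a i) = (y n).1 := by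
    intro n
    induction n with
    | zero => rw [List.length_eq_zero_iff.1 (y 0).2.2, List.ofFn_zero]
    | succ n ih => rw [ofFn_succ_eq_append, ih, ← ha n, y.par_succ]
  exact ⟨⟨a, fun n => by rw [key n]; exact (y n).2.1⟩, Arena.Play.ext fun n => Subtype.ext (key n)⟩

/-- The element of the canopy given by a play of the arena. -/
noncomputable def ofPlay (y : (treeArena hT).Play) : canopy T := (exists_eq_toPlay hT y).choose

theorem toPlay_ofPlay (y : (treeArena hT).Play) : toPlay hT (ofPlay hT y) = y :=
  (exists_eq_toPlay hT y).choose_spec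

theorem eq_of_toPlay_apply_eq {x x' : canopy T} {n : ℕ} (h : toPlay hT x n = toPlay hT x' n)
    {i : ℕ} (hi : i < n) : x.1 i = x'.1 i :=
  congrFun (List.ofFn_injective (congrArg Subtype.val h)) ⟨i, hi⟩

theorem ofPlay_toPlay (x : canopy T) : ofPlay hT (toPlay hT x) = x :=
  Subtype.ext (funext fun i => eq_of_toPlay_apply_eq hT (n := i + 1)
    (by rw [toPlay_ofPlay]) (Nat.lt_succ_self i))

theorem openSet_preimage_ofPlay [TopologicalSpace A] [DiscreteTopology A] {U : Set (canopy T)}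
    (hU : IsOpen U) : Arena.OpenSet (ofPlay hT ⁻¹' U) := by
  obtain ⟨V, hV, rfl⟩ := isOpen_induced_iff.1 hU
  intro y hy
  obtain ⟨I, u, hu, hsub⟩ := isOpen_pi_iff.1 hV _ hy
  refine ⟨I.sup id + 1, fun z hz => hsub fun i hi => ?_⟩
  have hle : i ≤ I.sup id := Finset.le_sup (f := id) hi
  have : (ofPlay hT z).1 i = (ofPlay hT y).1 i :=
    eq_of_toPlay_apply_eq hT (by rw [toPlay_ofPlay, toPlay_ofPlay, hz]) (Nat.lt_succ_of_le hle)
  rw [this]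
  exact (hu i hi).2

/-- Borel sets can be unravelled. -/
theorem unravels_of_borel [TopologicalSpace A] [DiscreteTopology A] {B : Set (canopy T)}
    (hB : MeasurableSet[borel (canopy T)] B) :
    Arena.Unravels (treeArena hT) (ofPlay hT ⁻¹' B) := by
  let M : MeasurableSpace (canopy T) :=
    { MeasurableSet' := fun B => Arena.Unravels (treeArena hT) (ofPlay hT ⁻¹' B)
      measurableSet_empty := (openSet_preimage_ofPlay hT isOpen_empty).unravels
      measurableSet_compl := fun B h => h.compl
      measurableSet_iUnion := fun B h => by
        rw [preimage_iUnion]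
        exact Arena.Unravels.iUnion (fun _ _ h => h.unravels) h }
  have hM : borel (canopy T) ≤ M :=
    MeasurableSpace.generateFrom_le fun U hU => (openSet_preimage_ofPlay hT hU).unravels
  exact hM B hB

theorem exists_strategy (σ : (treeArena hT).Strat) :
    ∃ s : List A → A, ∀ n (p : (treeArena hT).pos n), p.1 ++ [s p.1] = (σ n p).1 := by
  obtain ⟨p₀, hp₀⟩ := hT.1
  obtain ⟨a₀, -⟩ := hT.2.2 p₀ hp₀
  have hex : ∀ n (p : (treeArena hT).pos n), ∃ a : A, p.1 ++ [a] = (σ n p).1 := fun n p => by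
    have := append_of_par hT (σ n p)
    rwa [σ.par_apply] at this
  have : ∀ p : List A, ∃ a : A, ∀ h : p ∈ T,
      p ++ [a] = (σ p.length (⟨p, h, rfl⟩ : (treeArena hT).pos p.length)).1 := by
    intro p
    by_cases h : p ∈ T
    · exact (hex p.length ⟨p, h, rfl⟩).imp fun a ha _ => ha
    · exact ⟨a₀, fun h' => absurd h' h⟩
  choose s hs using this
  refine ⟨s, ?_⟩
  rintro _ ⟨p, h, rfl⟩
  exact hs p h

theorem follows_toPlay {σ : (treeArena hT).Strat} {s : List A → A}
    (hs : ∀ n (p : (treeArena hT).pos n), p.1 ++ [s p.1] = (σ n p).1) {i : ℕ} (x : canopy T)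
    (hx : ∀ n, n % 2 = i → x.1 n = s (List.ofFn fun i : Fin n => x.1 i)) :
    (treeArena hT).Follows i σ (toPlay hT x) := by
  refine fun n hn => Subtype.ext ?_
  rw [← hs]
  change (List.ofFn fun i : Fin (n + 1) => x.1 i) = _
  rw [ofFn_succ_eq_append, hx n hn]
  rfl

/-- Borel determinacy: one of the players has a winning strategy in a game with a Borel
winning set. -/
theorem borel_determinacy [TopologicalSpace A] [DiscreteTopology A] {W : Set (ℕ → A)}
    (hT : IsTree T) (hW : BorelInCanopy T W) : (∃ s : List A → A, ValidI T s ∧ playsI T s ⊆ W) ∨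
      ∃ s : List A → A, ValidII T s ∧ ∀ x ∈ playsII T s, x ∉ W := by
  have hmem : ∀ {σ : (treeArena hT).Strat} {s : List A → A},
      (∀ n (p : (treeArena hT).pos n), p.1 ++ [s p.1] = (σ n p).1) →
      ∀ p ∈ T, p ++ [s p] ∈ T := fun {σ s} hs p hp => by
    have := hs p.length ⟨p, hp, rfl⟩
    exact this ▸ (σ _ _).2.1
  refine (unravels_of_borel hT hW).determined.imp ?_ ?_
  · rintro ⟨σ, hσ⟩
    obtain ⟨s, hs⟩ := exists_strategy hT σ
    refine ⟨s, fun p hp _ => hmem hs p hp, fun x hx => ?_⟩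
    have := hσ _ (follows_toPlay hT hs ⟨x, hx.1⟩ fun n hn => hx.2 n (Nat.even_iff.2 hn))
    rwa [mem_preimage, ofPlay_toPlay] at this
  · rintro ⟨σ, hσ⟩
    obtain ⟨s, hs⟩ := exists_strategy hT σ
    refine ⟨s, fun p hp _ => hmem hs p hp, fun x hx hxW => ?_⟩
    refine hσ _ (follows_toPlay hT hs ⟨x, hx.1⟩ fun n hn => hx.2 n (Nat.odd_iff.2 hn)) ?_
    rwa [mem_preimage, ofPlay_toPlay]

end Tree

end BorelGame

/-- Main principle: if `ξ` is monotone on subsets of the canopy and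
`ξ W < inf over Player I strategies of ξ(⟦s_I⟧)`, then Player I has no winning strategy in
`(T,W)`; if moreover `W` is Borel in `⟦T⟧` or `ξ` is Borel regular, then Player II has a
winning strategy. -/
theorem main_monotone_principle [TopologicalSpace A] [DiscreteTopology A]
    (T : Set (List A)) (hT : IsTree T)
    (ξ : Set (ℕ → A) → ℝ≥0∞)
    (hmono : ∀ C Z : Set (ℕ → A), C ⊆ Z → Z ⊆ canopy T → ξ C ≤ ξ Z)
    (W : Set (ℕ → A)) (hWsub : W ⊆ canopy T)
    (hW : ξ W < ⨅ (s : List A → A) (_ : ValidI T s), ξ (playsI T s)) :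
    (¬ ∃ s : List A → A, ValidI T s ∧ playsI T s ⊆ W) ∧
    ((BorelInCanopy T W ∨
        ∀ C : Set (ℕ → A), C ⊆ canopy T → ∃ Z : Set (ℕ → A),
          C ⊆ Z ∧ Z ⊆ canopy T ∧ BorelInCanopy T Z ∧ ξ C = ξ Z) →
      ∃ s : List A → A, ValidII T s ∧ ∀ x ∈ playsII T s, x ∉ W) := by
  have hI : ∀ Z : Set (ℕ → A), Z ⊆ canopy T → ξ Z = ξ W →
      ¬ ∃ s : List A → A, ValidI T s ∧ playsI T s ⊆ Z := by
    rintro Z hZ hξ ⟨s, hs, hsZ⟩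
    exact absurd ((iInf₂_le s hs).trans ((hmono _ _ hsZ hZ).trans_eq hξ)) (not_le.2 hW)
  refine ⟨hI W hWsub rfl, ?_⟩
  rintro (hB | hreg)
  · exact (BorelGame.borel_determinacy hT hB).resolve_left (hI W hWsub rfl)
  · obtain ⟨Z, hWZ, hZ, hB, hξ⟩ := hreg W hWsub
    obtain ⟨s, hs, hsZ⟩ := (BorelGame.borel_determinacy hT hB).resolve_left (hI Z hZ hξ.symm)
    exact ⟨s, hs, fun x hx hxW => hsZ x hx (hWZ hxW)⟩
end
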